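/- arXiv:1510.02421 — 3 statements merged into one kernel-verified Lean document; each statement's English description precedes it below -/
import Mathlib

section
/- For m ≥ n ≥ 3, M(C_n □ C_m) = Z(C_n □ C_m) = 2n−1 if m = n and n is odd, and M(C_n □ C_m) = Z(C_n □ C_m) = 2n otherwise. -/
namespace PaperPD

open SimpleGraph

variable {V α β : Type*}

/-- Vertices that eventually become blue in the standard zero forcing process
starting from the blue set `B`. -/
inductive ZFClosure (G : SimpleGraph V) (B : Set V) : V → Prop
  | init (v : V) (hv : v ∈ B) : ZFClosure G B v
  | force (u w : V) (hu : ZFClosure G B u) (huw : G.Adj u w)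
      (h : ∀ x, G.Adj u x → x ≠ w → ZFClosure G B x) : ZFClosure G B w

/-- `B` is a zero forcing set of `G`. -/
def IsZeroForcingSet (G : SimpleGraph V) (B : Set V) : Prop :=
  ∀ v, ZFClosure G B v

/-- The zero forcing number `Z(G)`. -/
noncomputable def zeroForcingNumber (G : SimpleGraph V) [Fintype V] : ℕ :=
  sInf {k | ∃ B : Finset V, B.card = k ∧ IsZeroForcingSet G ↑B}

/-- Vertices that eventually become blue in the skew zero forcing process
starting from the blue set `B` (the forcing vertex need not be blue). -/
inductive SkewZFClosure (G : SimpleGraph V) (B : Set V) : V → Prop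
  | init (v : V) (hv : v ∈ B) : SkewZFClosure G B v
  | force (u w : V) (huw : G.Adj u w)
      (h : ∀ x, G.Adj u x → x ≠ w → SkewZFClosure G B x) : SkewZFClosure G B w

/-- `B` is a skew zero forcing set of `G`. -/
def IsSkewZeroForcingSet (G : SimpleGraph V) (B : Set V) : Prop :=
  ∀ v, SkewZFClosure G B v

/-- The skew zero forcing number `Z⁻(G)`. -/
noncomputable def skewZeroForcingNumber (G : SimpleGraph V) [Fintype V] : ℕ :=
  sInf {k | ∃ B : Finset V, B.card = k ∧ IsSkewZeroForcingSet G ↑B}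

/-- The closed neighborhood `N[S]` of a set of vertices. -/
def closedNbhd (G : SimpleGraph V) (S : Set V) : Set V :=
  S ∪ {v | ∃ u ∈ S, G.Adj u v}

/-- `S` is a power dominating set of `G`, i.e. `N[S]` is a zero forcing set. -/
def IsPowerDominatingSet (G : SimpleGraph V) (S : Set V) : Prop :=
  IsZeroForcingSet G (closedNbhd G S)

/-- The power domination number `γ_P(G)`. -/
noncomputable def powerDominationNumber (G : SimpleGraph V) [Fintype V] : ℕ :=
  sInf {k | ∃ S : Finset V, S.card = k ∧ IsPowerDominatingSet G ↑S}

/-- `S` is a dominating set of `G` (`N[S] = V`). -/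
def IsDominatingSet (G : SimpleGraph V) (S : Set V) : Prop :=
  ∀ v, v ∈ closedNbhd G S

/-- The domination number `γ(G)`. -/
noncomputable def dominationNumber (G : SimpleGraph V) [Fintype V] : ℕ :=
  sInf {k | ∃ S : Finset V, S.card = k ∧ IsDominatingSet G ↑S}

/-- `S` is a total dominating set of `G` (`N(S) = V`). -/
def IsTotalDominatingSet (G : SimpleGraph V) (S : Set V) : Prop :=
  ∀ v, ∃ u ∈ S, G.Adj u v

/-- The total domination number `γ_t(G)`. -/
noncomputable def totalDominationNumber (G : SimpleGraph V) [Fintype V] : ℕ :=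
  sInf {k | ∃ S : Finset V, S.card = k ∧ IsTotalDominatingSet G ↑S}

/-- The degree of a vertex. -/
noncomputable def deg (G : SimpleGraph V) (v : V) : ℕ :=
  (G.neighborSet v).ncard

/-- The maximum degree `Δ(G)`. -/
noncomputable def maxDeg (G : SimpleGraph V) [Fintype V] : ℕ :=
  Finset.univ.sup fun v => deg G v

/-- `A` is a symmetric real matrix whose off-diagonal nonzero pattern is
described by the graph `G`, i.e. `A ∈ S(G)`. -/
def MatrixOfGraph (G : SimpleGraph V) (A : Matrix V V ℝ) : Prop :=
  A.IsSymm ∧ ∀ i j, i ≠ j → (A i j ≠ 0 ↔ G.Adj i j)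

/-- The nullity of a square real matrix. -/
noncomputable def nullity [Fintype V] [DecidableEq V] (A : Matrix V V ℝ) : ℕ :=
  Fintype.card V - A.rank

/-- The maximum nullity `M(G)`. -/
noncomputable def maxNullity (G : SimpleGraph V) [Fintype V] [DecidableEq V] : ℕ :=
  sSup {k | ∃ A : Matrix V V ℝ, MatrixOfGraph G A ∧ nullity A = k}

/-- The tensor (direct) product of two simple graphs. -/
def tensorProd (G : SimpleGraph α) (H : SimpleGraph β) : SimpleGraph (α × β) where
  Adj p q := G.Adj p.1 q.1 ∧ H.Adj p.2 q.2
  symm.symm _ _ h := ⟨h.1.symm, h.2.symm⟩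
  loopless.irrefl p h := G.loopless.irrefl p.1 h.1

/-- The lexicographic product of two simple graphs. -/
def lexProd (G : SimpleGraph α) (H : SimpleGraph β) : SimpleGraph (α × β) where
  Adj p q := G.Adj p.1 q.1 ∨ (p.1 = q.1 ∧ H.Adj p.2 q.2)
  symm.symm _ _ h := h.elim (fun h' => Or.inl h'.symm) (fun h' => Or.inr ⟨h'.1.symm, h'.2.symm⟩)
  loopless.irrefl p h := h.elim (fun h' => G.loopless.irrefl p.1 h') (fun h' => H.loopless.irrefl p.2 h'.2)

/-!
The nullity of a matrix in `S(G)` is at most the size of any zero forcing set of `G`, since a kernel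
vector vanishing on the blue vertices vanishes on every vertex they force. So it suffices to find
`A ∈ S(C_n □ C_m)` whose nullity is the size of some zero forcing set.

If `A ∈ S(C_n)` and `B ∈ S(C_m)`, then `A ⊗ 1 - 1 ⊗ B ∈ S(C_n □ C_m)`, and its nullity counts the
pairs of coinciding eigenvalues of `A` and `B`. Taking both spectra of the form `0, 0, 2, 2, 4, …`
gives `2n` coincidences, and `2n - 1` when `m = n` is odd, where the top eigenvalue is simple in
both spectra. Such matrices come from an inverse eigenvalue problem: a monic `P` is the
characteristic polynomial of a diagonal matrix `diag(μ)` bordered by a vector `z` exactly when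
`z j ^ 2` is minus the residue of `P / ∏ (X - μ j)` at `μ j`. Splitting `z = x + y` with `y`
orthogonal to `x, D x, …, D ^ (N - 2) x`, where `D = diag(μ)` has size `N`, the orthonormalized
Krylov basis of `x` turns `D` into a Jacobi matrix and `x`, `y` into multiples of the first and last
basis vectors, so that the bordered matrix becomes a matrix of the cycle. The orthogonality forces
`x j * y j` to be proportional to the barycentric weights of `μ`.

Two adjacent blue columns force everything. When `m = n` is odd, a full row and the next row minus
one vertex suffice: on each side of the full row grows a triangle of blue vertices, narrowing by one
column at both ends with every row, and the two columns in the middle become entirely blue.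
-/

section MaximumNullity

variable [Fintype V] {G : SimpleGraph V}

lemma ZFClosure.apply_eq_zero {A : Matrix V V ℝ} (hA : MatrixOfGraph G A) {x : V → ℝ}
    (hx : A.mulVec x = 0) {B : Set V} (hxB : ∀ b ∈ B, x b = 0) {v : V} (hv : ZFClosure G B v) :
    x v = 0 := by
  induction hv with
  | init v hv => exact hxB v hv
  | force u w _ huw _ hu0 hnbr0 =>
    have hrow : ∑ y, A u y * x y = A u w * x w := by
      refine Finset.sum_eq_single w (fun y _ hyw ↦ ?_) (by simp)
      by_cases hyu : y = u
      · rw [hyu, hu0, mul_zero]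
      by_cases huy : G.Adj u y
      · rw [hnbr0 y huy hyw, mul_zero]
      · rw [not_ne_iff.mp (mt (hA.2 u y (Ne.symm hyu)).1 huy), zero_mul]
    have h0 : A u w * x w = 0 := hrow.symm.trans (congrFun hx u)
    exact (mul_eq_zero.mp h0).resolve_left ((hA.2 u w huw.ne).2 huw)

variable [DecidableEq V]

lemma nullity_eq_finrank_ker (A : Matrix V V ℝ) :
    nullity A = Module.finrank ℝ (LinearMap.ker A.mulVecLin) := by
  have h := LinearMap.finrank_range_add_finrank_ker A.mulVecLin
  rw [Module.finrank_fintype_fun_eq_card] at h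
  rw [nullity, Matrix.rank]
  omega

lemma nullity_le_card_of_isZeroForcingSet {A : Matrix V V ℝ} (hA : MatrixOfGraph G A)
    {B : Finset V} (hB : IsZeroForcingSet G ↑B) : nullity A ≤ B.card := by
  let restrict : LinearMap.ker A.mulVecLin →ₗ[ℝ] (B → ℝ) :=
    LinearMap.funLeft ℝ ℝ (Subtype.val : B → V) ∘ₗ Submodule.subtype _
  have hinj : Function.Injective restrict := by
    refine (injective_iff_map_eq_zero restrict).2 fun x hx ↦ Subtype.ext (funext fun v ↦ ?_)
    exact (hB v).apply_eq_zero hA x.2 fun b hb ↦ congrFun hx ⟨b, hb⟩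
  simpa [nullity_eq_finrank_ker] using LinearMap.finrank_le_finrank_of_injective hinj

lemma maxNullity_eq_and_zeroForcingNumber_eq {k : ℕ} {A : Matrix V V ℝ} (hA : MatrixOfGraph G A)
    (hAk : nullity A = k) {B : Finset V} (hB : IsZeroForcingSet G ↑B) (hBk : B.card = k) :
    maxNullity G = k ∧ zeroForcingNumber G = k := by
  have hmax : IsGreatest {k | ∃ A : Matrix V V ℝ, MatrixOfGraph G A ∧ nullity A = k} k := by
    refine ⟨⟨A, hA, hAk⟩, ?_⟩
    rintro _ ⟨A', hA', rfl⟩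
    exact hBk ▸ nullity_le_card_of_isZeroForcingSet hA' hB
  have hmin : IsLeast {k | ∃ B : Finset V, B.card = k ∧ IsZeroForcingSet G ↑B} k := by
    refine ⟨⟨B, hBk, hB⟩, ?_⟩
    rintro _ ⟨B', rfl, hB'⟩
    exact hAk ▸ nullity_le_card_of_isZeroForcingSet hA hB'
  exact ⟨hmax.csSup_eq, hmin.csInf_eq⟩

end MaximumNullity

section Kronecker

open scoped Kronecker

variable {W : Type*} [DecidableEq V] [DecidableEq W]

lemma MatrixOfGraph.kronecker_one_sub_one_kronecker {G : SimpleGraph V} {H : SimpleGraph W}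
    {A : Matrix V V ℝ} {B : Matrix W W ℝ} (hA : MatrixOfGraph G A) (hB : MatrixOfGraph H B) :
    MatrixOfGraph (G.boxProd H) (A ⊗ₖ (1 : Matrix W W ℝ) - (1 : Matrix V V ℝ) ⊗ₖ B) := by
  constructor
  · rw [Matrix.IsSymm, Matrix.transpose_sub, ← Matrix.kroneckerMap_transpose,
      ← Matrix.kroneckerMap_transpose, hA.1, hB.1, Matrix.transpose_one, Matrix.transpose_one]
  · rintro ⟨i, j⟩ ⟨i', j'⟩ hne
    rw [boxProd_adj, Matrix.sub_apply, Matrix.kronecker_apply, Matrix.kronecker_apply]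
    obtain rfl | hi := eq_or_ne i i'
    · have hj : j ≠ j' := fun h ↦ hne (by rw [h])
      simp [hj, hB.2 j j' hj]
    · obtain rfl | hj := eq_or_ne j j'
      · simp [hi, hA.2 i i' hi]
      · simp [hi, hj]

variable [Fintype V] [Fintype W]

lemma kronecker_one_sub_one_kronecker_eq_conj_diagonal {R : Type*} [CommRing R]
    {A P P' : Matrix V V R} {B Q Q' : Matrix W W R} {a : V → R} {b : W → R}
    (hP : P * P' = 1) (hQ : Q * Q' = 1)
    (hA : A = P * Matrix.diagonal a * P') (hB : B = Q * Matrix.diagonal b * Q') :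
    A ⊗ₖ (1 : Matrix W W R) - (1 : Matrix V V R) ⊗ₖ B =
      (P ⊗ₖ Q) * Matrix.diagonal (fun p ↦ a p.1 - b p.2) * (P' ⊗ₖ Q') := by
  have hdiag : Matrix.diagonal (fun p : V × W ↦ a p.1 - b p.2) =
      Matrix.diagonal a ⊗ₖ (1 : Matrix W W R) - (1 : Matrix V V R) ⊗ₖ Matrix.diagonal b := by
    rw [← Matrix.diagonal_one, ← Matrix.diagonal_one, Matrix.diagonal_kronecker_diagonal,
      Matrix.diagonal_kronecker_diagonal, Matrix.diagonal_sub]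
    simp
  rw [hdiag, Matrix.mul_sub, Matrix.sub_mul]
  simp_rw [← Matrix.mul_kronecker_mul, Matrix.mul_one, hP, hQ, ← hA, ← hB]

lemma nullity_kronecker_one_sub_one_kronecker {A : Matrix V V ℝ} {B : Matrix W W ℝ}
    (hA : A.IsHermitian) (hB : B.IsHermitian) :
    nullity (A ⊗ₖ (1 : Matrix W W ℝ) - (1 : Matrix V V ℝ) ⊗ₖ B) =
      (A.charpoly.roots.map fun t ↦ B.charpoly.roots.count t).sum := by
  let P := hA.eigenvectorUnitary
  let Q := hB.eigenvectorUnitary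
  let D := Matrix.diagonal fun p : V × W ↦ hA.eigenvalues p.1 - hB.eigenvalues p.2
  have hP : (P : Matrix V V ℝ) * (star P : Matrix V V ℝ) = 1 := Unitary.mul_star_self_of_mem P.2
  have hQ : (Q : Matrix W W ℝ) * (star Q : Matrix W W ℝ) = 1 := Unitary.mul_star_self_of_mem Q.2
  have hPQ : ((P : Matrix V V ℝ) ⊗ₖ (Q : Matrix W W ℝ)) *
      ((star P : Matrix V V ℝ) ⊗ₖ (star Q : Matrix W W ℝ)) = 1 := by
    rw [← Matrix.mul_kronecker_mul, hP, hQ, Matrix.one_kronecker_one]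
  have hdetPQ := Matrix.isUnit_det_of_right_inverse hPQ
  have hdetPQ' := Matrix.isUnit_det_of_left_inverse hPQ
  have hrank : (A ⊗ₖ (1 : Matrix W W ℝ) - (1 : Matrix V V ℝ) ⊗ₖ B).rank = D.rank := by
    rw [kronecker_one_sub_one_kronecker_eq_conj_diagonal hP hQ hA.spectral_theorem
      hB.spectral_theorem, Matrix.rank_mul_eq_left_of_isUnit_det _ _ hdetPQ',
      Matrix.rank_mul_eq_right_of_isUnit_det _ _ hdetPQ]
    rfl
  have hzeros : (A.charpoly.roots.map fun t ↦ B.charpoly.roots.count t).sum =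
      Fintype.card {p : V × W // hA.eigenvalues p.1 - hB.eigenvalues p.2 = 0} := by
    rw [hA.roots_charpoly_eq_eigenvalues, hB.roots_charpoly_eq_eigenvalues, Multiset.map_map,
      Fintype.card_subtype, Finset.card_filter, Fintype.sum_prod_type]
    simp [Multiset.count_map, sub_eq_zero, Finset.card]
  rw [nullity, hrank, Matrix.rank_diagonal, hzeros,
    Fintype.card_subtype_compl fun p : V × W ↦ hA.eigenvalues p.1 - hB.eigenvalues p.2 = 0]
  exact Nat.sub_sub_self (Fintype.card_subtype_le _)

end Kronecker

section Lanczos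

open InnerProductSpace Matrix

variable {𝕜 E : Type*} [RCLike 𝕜] [NormedAddCommGroup E] [InnerProductSpace 𝕜 E]

section Krylov

variable {R M : Type*} [Semiring R] [AddCommMonoid M] [Module R M]

/-- The Krylov sequence `x, T x, …, T ^ (N - 1) x`, the input of the Lanczos process. -/
def krylov (T : M →ₗ[R] M) (x : M) (N : ℕ) (i : Fin N) : M :=
  (T ^ (i : ℕ)) x

lemma apply_krylov {T : M →ₗ[R] M} {x : M} {N : ℕ} {i l : Fin N} (hil : (i : ℕ) + 1 = l) :
    T (krylov T x N i) = krylov T x N l := by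
  rw [krylov, krylov, ← hil, pow_succ', Module.End.mul_apply]

end Krylov

section GramSchmidt

variable {ι : Type*} [FiniteDimensional 𝕜 E] [LinearOrder ι] [LocallyFiniteOrderBot ι]
  [WellFoundedLT ι] [Fintype ι]

lemma span_gramSchmidtOrthonormalBasis_Iic (h : Module.finrank 𝕜 E = Fintype.card ι) {f : ι → E}
    (hf : LinearIndependent 𝕜 f) (i : ι) :
    Submodule.span 𝕜 (gramSchmidtOrthonormalBasis h f '' Set.Iic i) =
      Submodule.span 𝕜 (f '' Set.Iic i) := by
  have hb : ⇑(gramSchmidtOrthonormalBasis h f) = gramSchmidtNormed 𝕜 f :=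
    funext fun k ↦ gramSchmidtOrthonormalBasis_apply h <| norm_ne_zero_iff.mp <| by
      rw [gramSchmidtNormed_unit_length k hf]; exact one_ne_zero
  rw [hb, span_gramSchmidtNormed, span_gramSchmidt_Iic]

lemma inner_gramSchmidtOrthonormalBasis_self_ne_zero (h : Module.finrank 𝕜 E = Fintype.card ι)
    {f : ι → E} (hf : LinearIndependent 𝕜 f) (i : ι) :
    inner 𝕜 (gramSchmidtOrthonormalBasis h f i) (f i) ≠ 0 := by
  have hdet := (Module.Basis.is_basis_iff_det (gramSchmidtOrthonormalBasis h f).toBasis).mp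
    ⟨hf, hf.span_eq_top_of_card_eq_finrank' h.symm⟩
  rw [gramSchmidtOrthonormalBasis_det] at hdet
  exact Finset.prod_ne_zero_iff.mp hdet.ne_zero i (Finset.mem_univ i)

end GramSchmidt

variable {N : ℕ} {T : E →ₗ[𝕜] E} {x : E}
  [FiniteDimensional 𝕜 E] (h : Module.finrank 𝕜 E = Fintype.card (Fin N))

/-- The Lanczos basis: the orthonormalized Krylov sequence. A symmetric `T` is tridiagonal in it. -/
noncomputable def lanczosBasis (T : E →ₗ[𝕜] E) (x : E) : OrthonormalBasis (Fin N) 𝕜 E :=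
  gramSchmidtOrthonormalBasis h (krylov T x N)

lemma inner_lanczosBasis_apply_eq_zero (hf : LinearIndependent 𝕜 (krylov T x N)) {i l : Fin N}
    (hil : (i : ℕ) + 1 < l) : ⟪lanczosBasis h T x l, T (lanczosBasis h T x i)⟫_𝕜 = 0 := by
  have hspan : Submodule.span 𝕜 (krylov T x N '' Set.Iic i) ≤
      LinearMap.ker (innerₛₗ 𝕜 (lanczosBasis h T x l) ∘ₗ T) := by
    rw [Submodule.span_le]
    rintro _ ⟨k, hk, rfl⟩
    have hk' : (k : ℕ) + 1 < l := lt_of_le_of_lt (Nat.succ_le_succ hk) hil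
    change ⟪lanczosBasis h T x l, T (krylov T x N k)⟫_𝕜 = 0
    rw [apply_krylov (l := ⟨k + 1, hk'.trans l.2⟩) rfl]
    exact gramSchmidtOrthonormalBasis_inv_triangular h _ hk'
  rw [← span_gramSchmidtOrthonormalBasis_Iic h hf] at hspan
  exact hspan (Submodule.subset_span ⟨i, Set.self_mem_Iic, rfl⟩)

lemma inner_lanczosBasis_apply_ne_zero (hf : LinearIndependent 𝕜 (krylov T x N)) {i l : Fin N}
    (hil : (i : ℕ) + 1 = l) : ⟪lanczosBasis h T x l, T (lanczosBasis h T x i)⟫_𝕜 ≠ 0 := by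
  intro h0
  have hspan : Submodule.span 𝕜 (lanczosBasis h T x '' Set.Iic i) ≤
      LinearMap.ker (innerₛₗ 𝕜 (lanczosBasis h T x l) ∘ₗ T) := by
    rw [Submodule.span_le]
    rintro _ ⟨k, hk, rfl⟩
    obtain rfl | hk := eq_or_lt_of_le (show k ≤ i from hk)
    · exact h0
    · exact inner_lanczosBasis_apply_eq_zero h hf (hil ▸ Nat.succ_lt_succ hk)
  rw [lanczosBasis, span_gramSchmidtOrthonormalBasis_Iic h hf] at hspan
  have hl : ⟪lanczosBasis h T x l, T (krylov T x N i)⟫_𝕜 = 0 :=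
    hspan (Submodule.subset_span ⟨i, Set.self_mem_Iic, rfl⟩)
  rw [apply_krylov hil] at hl
  exact inner_gramSchmidtOrthonormalBasis_self_ne_zero h hf l hl

lemma inner_lanczosBasis_start_ne_zero_iff (hf : LinearIndependent 𝕜 (krylov T x N)) (i : Fin N) :
    ⟪lanczosBasis h T x i, x⟫_𝕜 ≠ 0 ↔ (i : ℕ) = 0 := by
  have hx : krylov T x N ⟨0, i.pos⟩ = x := rfl
  refine ⟨not_imp_comm.mp fun hi ↦ ?_, fun hi ↦ ?_⟩
  · have h0 : ⟪lanczosBasis h T x i, krylov T x N ⟨0, i.pos⟩⟫_𝕜 = 0 :=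
      gramSchmidtOrthonormalBasis_inv_triangular h _ (Nat.pos_of_ne_zero hi)
    rwa [hx] at h0
  · have h0 := inner_gramSchmidtOrthonormalBasis_self_ne_zero h hf i
    rwa [show krylov T x N i = x by rw [← hx]; exact congrArg _ (Fin.ext hi)] at h0

lemma inner_lanczosBasis_ne_zero_iff_of_orthogonal (hf : LinearIndependent 𝕜 (krylov T x N)) {y : E}
    (hy : y ≠ 0) (hyf : ∀ k : Fin N, (k : ℕ) + 1 < N → ⟪y, krylov T x N k⟫_𝕜 = 0) (i : Fin N) :
    ⟪lanczosBasis h T x i, y⟫_𝕜 ≠ 0 ↔ (i : ℕ) + 1 = N := by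
  have hzero (k : Fin N) (hk : (k : ℕ) + 1 < N) : ⟪lanczosBasis h T x k, y⟫_𝕜 = 0 := by
    have hspan : Submodule.span 𝕜 (krylov T x N '' Set.Iic k) ≤ LinearMap.ker (innerₛₗ 𝕜 y) := by
      rw [Submodule.span_le]
      rintro _ ⟨j, hj, rfl⟩
      exact hyf j (lt_of_le_of_lt (Nat.succ_le_succ hj) hk)
    rw [← span_gramSchmidtOrthonormalBasis_Iic h hf] at hspan
    exact inner_eq_zero_symm.mp (hspan (Submodule.subset_span ⟨k, Set.self_mem_Iic, rfl⟩))
  refine ⟨fun hi ↦ le_antisymm i.2 (not_lt.mp (mt (hzero i) hi)), fun hi h0 ↦ hy ?_⟩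
  refine InnerProductSpace.ext_inner_left_basis (𝕜 := 𝕜) (lanczosBasis h T x).toBasis fun k ↦ ?_
  rw [OrthonormalBasis.coe_toBasis, inner_zero_right]
  obtain hk | hk := lt_or_eq_of_le (Nat.succ_le_of_lt k.2)
  · exact hzero k hk
  · rwa [show k = i from Fin.ext (by omega)]

section OrthonormalBasisMatrix

variable {ι : Type*} [Fintype ι] (b : OrthonormalBasis ι ℝ (EuclideanSpace ℝ ι))

lemma of_orthonormalBasis_mulVec (v : ι → ℝ) (i : ι) :
    ((of fun i ↦ b i : Matrix ι ι ℝ) *ᵥ v) i = ⟪b i, WithLp.toLp 2 v⟫_ℝ := by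
  simp [mulVec, dotProduct, PiLp.inner_apply, mul_comm]

variable [DecidableEq ι]

lemma of_orthonormalBasis_mem_orthogonalGroup :
    (of fun i ↦ b i : Matrix ι ι ℝ) ∈ orthogonalGroup ι ℝ := by
  refine (mem_orthogonalGroup_iff ι ℝ).mpr (Matrix.ext fun i l ↦ ?_)
  rw [one_apply, ← orthonormal_iff_ite.mp b.orthonormal i l]
  exact of_orthonormalBasis_mulVec b (b l) i

lemma of_orthonormalBasis_mul_mul_transpose_apply (A : Matrix ι ι ℝ) (i l : ι) :
    ((of fun i ↦ b i) * A * (of fun i ↦ b i)ᵀ : Matrix ι ι ℝ) i l =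
      ⟪b i, toEuclideanLin A (b l)⟫_ℝ := by
  rw [Matrix.mul_assoc]
  exact of_orthonormalBasis_mulVec b (A *ᵥ b l) i

end OrthonormalBasisMatrix

section Diagonal

variable {μ : Fin N → ℝ}

lemma krylov_toEuclideanLin_diagonal (μ x : Fin N → ℝ) (i : Fin N) :
    krylov (toEuclideanLin (diagonal μ)) (WithLp.toLp 2 x) N i =
      WithLp.toLp 2 fun j ↦ x j * μ j ^ (i : ℕ) := by
  have hpow (k : ℕ) : (toEuclideanLin (diagonal μ) ^ k) (WithLp.toLp 2 x) =
      WithLp.toLp 2 fun j ↦ x j * μ j ^ k := by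
    induction k with
    | zero => simp
    | succ k ih =>
      rw [pow_succ', Module.End.mul_apply, ih]
      ext j
      simp only [toLpLin_toLp, toLin'_apply, mulVec_diagonal]
      ring
  exact hpow i

lemma linearIndependent_krylov_diagonal (hμ : Function.Injective μ) {x : Fin N → ℝ}
    (hx : ∀ j, x j ≠ 0) :
    LinearIndependent ℝ (krylov (toEuclideanLin (diagonal μ)) (WithLp.toLp 2 x) N) := by
  have hdet : (diagonal x * vandermonde μ).det ≠ 0 := by
    rw [det_mul, det_diagonal]
    exact mul_ne_zero (Finset.prod_ne_zero_iff.mpr fun j _ ↦ hx j)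
      (det_vandermonde_ne_zero_iff.mpr hμ)
  have hcol : krylov (toEuclideanLin (diagonal μ)) (WithLp.toLp 2 x) N =
      (WithLp.linearEquiv 2 ℝ (Fin N → ℝ)).symm ∘ (diagonal x * vandermonde μ).col := by
    funext i
    rw [krylov_toEuclideanLin_diagonal]
    ext j
    simp [vandermonde]
  rw [hcol]
  exact (linearIndependent_cols_of_det_ne_zero hdet).map' _ (LinearEquiv.ker _)

lemma exists_orthogonal_matrixOfGraph_pathGraph (hμ : Function.Injective μ) {x y : Fin N → ℝ}
    (hx : ∀ j, x j ≠ 0) (hy : y ≠ 0)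
    (hxy : ∀ k : ℕ, k + 1 < N → ∑ j, x j * μ j ^ k * y j = 0) :
    ∃ Q ∈ orthogonalGroup (Fin N) ℝ, MatrixOfGraph (pathGraph N) (Q * diagonal μ * Qᵀ) ∧
      (∀ i, (Q *ᵥ x) i ≠ 0 ↔ (i : ℕ) = 0) ∧ ∀ i, (Q *ᵥ y) i ≠ 0 ↔ (i : ℕ) + 1 = N := by
  have h : Module.finrank ℝ (EuclideanSpace ℝ (Fin N)) = Fintype.card (Fin N) :=
    finrank_euclideanSpace
  let T := toEuclideanLin (diagonal μ)
  let b := lanczosBasis h T (WithLp.toLp 2 x)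
  have hli := linearIndependent_krylov_diagonal hμ hx
  let Q : Matrix (Fin N) (Fin N) ℝ := of fun i ↦ b i
  have hsymm : (Q * diagonal μ * Qᵀ).IsSymm := by
    rw [IsSymm, transpose_mul, transpose_mul, transpose_transpose, diagonal_transpose,
      Matrix.mul_assoc]
  have hpath {i l : Fin N} (hil : i < l) :
      (Q * diagonal μ * Qᵀ) l i ≠ 0 ↔ (i : ℕ) + 1 = l := by
    rw [of_orthonormalBasis_mul_mul_transpose_apply]
    refine ⟨not_imp_comm.mp fun hne ↦ ?_, inner_lanczosBasis_apply_ne_zero h hli⟩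
    exact inner_lanczosBasis_apply_eq_zero h hli (lt_of_le_of_ne hil hne)
  refine ⟨Q, of_orthonormalBasis_mem_orthogonalGroup b, ⟨hsymm, fun i l hil ↦ ?_⟩,
    fun i ↦ ?_, fun i ↦ ?_⟩
  · rw [pathGraph_adj]
    obtain hlt | hlt := lt_or_gt_of_ne hil
    · rw [← hsymm.apply, hpath hlt]
      omega
    · rw [hpath hlt]
      omega
  · rw [of_orthonormalBasis_mulVec]
    exact inner_lanczosBasis_start_ne_zero_iff h hli i
  · rw [of_orthonormalBasis_mulVec]
    refine inner_lanczosBasis_ne_zero_iff_of_orthogonal h hli (by simpa using hy) (fun k hk ↦ ?_) i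
    rw [krylov_toEuclideanLin_diagonal, ← hxy k hk]
    simp [PiLp.inner_apply]

end Diagonal

end Lanczos

section BorderedMatrix

open Matrix Polynomial

variable {ι R K : Type*}

/-- The matrix `A` bordered by a last row and a last column equal to `z`, with corner entry `a`.
Bordering a matrix of a path at the two ends of the path gives a matrix of a cycle. -/
def borderedMatrix (A : Matrix ι ι R) (z : ι → R) (a : R) : Matrix (ι ⊕ Fin 1) (ι ⊕ Fin 1) R :=
  fromBlocks A (replicateCol (Fin 1) z) (replicateRow (Fin 1) z) (of fun _ _ ↦ a)

lemma charpoly_borderedMatrix_conj [Fintype ι] [DecidableEq ι] [CommRing R] {Q : Matrix ι ι R}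
    (hQ : Q ∈ orthogonalGroup ι R) (A : Matrix ι ι R) (z : ι → R) (a : R) :
    (borderedMatrix (Q * A * Qᵀ) (Q *ᵥ z) a).charpoly = (borderedMatrix A z a).charpoly := by
  have hQQ : Qᵀ * Q = 1 := (mem_orthogonalGroup_iff' ι R).mp hQ
  have hconj : borderedMatrix (Q * A * Qᵀ) (Q *ᵥ z) a =
      fromBlocks Q 0 0 1 * (borderedMatrix A z a * fromBlocks Qᵀ 0 0 1) := by
    simp only [borderedMatrix, fromBlocks_multiply, Matrix.mul_zero, Matrix.zero_mul, add_zero,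
      zero_add, Matrix.mul_one, Matrix.one_mul, Matrix.mul_assoc]
    rw [replicateCol_mulVec, ← vecMul_transpose, replicateRow_vecMul]
  rw [hconj, charpoly_mul_comm, Matrix.mul_assoc, fromBlocks_multiply]
  simp [hQQ]

variable [Fintype ι] [DecidableEq ι] [Field K]

lemma eval_charpoly_borderedMatrix_diagonal {μ : ι → K} (z : ι → K) (a : K) {t : K}
    (ht : ∀ j, t ≠ μ j) :
    (borderedMatrix (diagonal μ) z a).charpoly.eval t =
      (Lagrange.nodal Finset.univ μ).eval t * (t - a - ∑ j, z j ^ 2 * (t - μ j)⁻¹) := by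
  have ht' (j : ι) : t - μ j ≠ 0 := sub_ne_zero.mpr (ht j)
  have hscalar : scalar (ι ⊕ Fin 1) t - borderedMatrix (diagonal μ) z a =
      fromBlocks (diagonal fun j ↦ t - μ j) (-replicateCol (Fin 1) z) (-replicateRow (Fin 1) z)
        (of fun _ _ ↦ t - a) := by
    ext (i | i) (j | j) <;> simp [borderedMatrix, diagonal_apply, Fin.fin_one_eq_zero, apply_ite₂]
  let hinv : Invertible (diagonal fun j ↦ t - μ j) :=
    ⟨diagonal fun j ↦ (t - μ j)⁻¹, by simp [ht'], by simp [ht']⟩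
  have hinvOf : ⅟(diagonal fun j ↦ t - μ j) = diagonal fun j ↦ (t - μ j)⁻¹ := rfl
  rw [Matrix.eval_charpoly, hscalar, det_fromBlocks₁₁, hinvOf, det_diagonal, Lagrange.eval_nodal,
    det_unique, Matrix.sub_apply, Matrix.mul_apply]
  congr 2
  refine Finset.sum_congr rfl fun j _ ↦ ?_
  rw [mul_diagonal]
  simp only [Matrix.neg_apply, replicateRow_apply, replicateCol_apply, neg_mul, mul_neg, neg_neg]
  ring

open Lagrange in
lemma exists_eval_eq_nodal_mul {μ : ι → K} (hμ : Function.Injective μ) {P : K[X]} (hP : P.Monic)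
    (hdeg : P.natDegree = Fintype.card ι + 1) :
    ∃ a, ∀ t, (∀ j, t ≠ μ j) → P.eval t = (nodal Finset.univ μ).eval t *
      (t - a + ∑ j, nodalWeight Finset.univ μ j * (t - μ j)⁻¹ * P.eval (μ j)) := by
  let Q := nodal Finset.univ μ
  have hQ : Q.Monic := nodal_monic
  have hQdeg : Q.natDegree = Fintype.card ι := natDegree_nodal
  have hdiv : P /ₘ Q = X + C ((P /ₘ Q).coeff 0) := by
    refine Monic.eq_X_add_C ?_ ?_
    · have hle : Q.degree ≤ P.degree := by
        rw [degree_eq_natDegree hQ.ne_zero, degree_eq_natDegree hP.ne_zero, hQdeg, hdeg]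
        exact Nat.cast_le.mpr (Nat.le_succ _)
      rwa [Monic, leadingCoeff_divByMonic_of_monic hQ hle]
    · rw [natDegree_divByMonic P hQ, hdeg, hQdeg, Nat.add_sub_cancel_left]
  have hmod : P %ₘ Q = interpolate Finset.univ μ fun j ↦ P.eval (μ j) := by
    refine eq_interpolate_of_eval_eq _ hμ.injOn ?_ fun j _ ↦ ?_
    · exact (degree_modByMonic_lt P hQ).trans_eq degree_nodal
    · have h := congrArg (eval (μ j)) (modByMonic_add_div P Q)
      rwa [eval_add, eval_mul, eval_nodal_at_node (Finset.mem_univ j), zero_mul, add_zero] at h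
  refine ⟨-(P /ₘ Q).coeff 0, fun t ht ↦ ?_⟩
  conv_lhs => rw [← modByMonic_add_div P Q, hdiv, hmod, eval_add, eval_mul,
    eval_interpolate_not_at_node _ fun j _ ↦ ht j]
  simp only [eval_add, eval_X, eval_C, sub_neg_eq_add, Q]
  ring

lemma exists_charpoly_borderedMatrix_diagonal_eq [Infinite K] {μ : ι → K}
    (hμ : Function.Injective μ) {P : K[X]} (hP : P.Monic)
    (hdeg : P.natDegree = Fintype.card ι + 1) {z : ι → K}
    (hz : ∀ j, z j ^ 2 = -(P.eval (μ j) * Lagrange.nodalWeight Finset.univ μ j)) :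
    ∃ a, (borderedMatrix (diagonal μ) z a).charpoly = P := by
  obtain ⟨a, ha⟩ := exists_eval_eq_nodal_mul hμ hP hdeg
  refine ⟨a, Polynomial.eq_of_infinite_eval_eq _ _ ((Set.finite_range μ).infinite_compl.mono
    fun t ht ↦ ?_)⟩
  have ht' (j : ι) : t ≠ μ j := fun h ↦ ht ⟨j, h.symm⟩
  rw [Set.mem_ofPred_eq, eval_charpoly_borderedMatrix_diagonal z a ht', ha t ht']
  simp only [hz, neg_mul, Finset.sum_neg_distrib, sub_neg_eq_add]
  simp only [mul_comm (P.eval _), mul_right_comm]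

end BorderedMatrix

section InverseEigenvalue

open Matrix Polynomial

lemma cycleGraph_adj_iff_val {n : ℕ} (hn : 2 ≤ n) (u v : Fin n) :
    (cycleGraph n).Adj u v ↔ (u : ℕ) + 1 = v ∨ (v : ℕ) + 1 = u ∨
      ((u : ℕ) = 0 ∧ (v : ℕ) + 1 = n) ∨ ((v : ℕ) = 0 ∧ (u : ℕ) + 1 = n) := by
  have hval (u v : Fin n) : ((u - v : Fin n) : ℕ) = if v ≤ u then (u : ℕ) - v else n + u - v := by
    split_ifs with h
    · exact Fin.coe_sub_iff_le.mpr h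
    · exact Fin.coe_sub_iff_lt.mpr (not_le.mp h)
  rw [cycleGraph_adj', hval, hval]
  split_ifs <;> omega

lemma MatrixOfGraph.borderedMatrix_cycleGraph {N : ℕ} (hN : 2 ≤ N) {J : Matrix (Fin N) (Fin N) ℝ}
    (hJ : MatrixOfGraph (pathGraph N) J) {z : Fin N → ℝ}
    (hz : ∀ i : Fin N, z i ≠ 0 ↔ (i : ℕ) = 0 ∨ (i : ℕ) + 1 = N) (a : ℝ) :
    MatrixOfGraph (cycleGraph (N + 1))
      (reindex finSumFinEquiv finSumFinEquiv (borderedMatrix J z a)) := by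
  constructor
  · exact (IsSymm.fromBlocks hJ.1 (transpose_replicateCol z)
      (IsSymm.ext fun _ _ ↦ rfl)).submatrix _
  · intro i j hij
    obtain ⟨i, rfl⟩ := finSumFinEquiv.surjective i
    obtain ⟨j, rfl⟩ := finSumFinEquiv.surjective j
    rw [cycleGraph_adj_iff_val (by omega), reindex_apply, submatrix_apply, Equiv.symm_apply_apply,
      Equiv.symm_apply_apply]
    obtain i | i := i <;> obtain j | j := j
    · have hij' : i ≠ j := fun h ↦ hij (by rw [h])
      simp only [borderedMatrix, fromBlocks_apply₁₁, hJ.2 i j hij', pathGraph_adj,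
        finSumFinEquiv_apply_left, Fin.val_castAdd, Nat.add_right_cancel_iff]
      omega
    · simp only [borderedMatrix, fromBlocks_apply₁₂, replicateCol_apply, hz,
        finSumFinEquiv_apply_left, finSumFinEquiv_apply_right, Fin.val_castAdd, Fin.val_natAdd]
      omega
    · simp only [borderedMatrix, fromBlocks_apply₂₁, replicateRow_apply, hz,
        finSumFinEquiv_apply_left, finSumFinEquiv_apply_right, Fin.val_castAdd, Fin.val_natAdd]
      omega
    · exact absurd (congrArg _ (congrArg _ (Subsingleton.elim i j))) hij

open Lagrange in
lemma sum_nodalWeight_mul_pow_eq_zero {K ι : Type*} [Field K] [DecidableEq ι] {s : Finset ι}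
    {μ : ι → K} (hμ : Set.InjOn μ s) {k : ℕ} (hk : k + 1 < s.card) :
    ∑ j ∈ s, nodalWeight s μ j * μ j ^ k = 0 := by
  have hdeg : (X ^ k : K[X]).degree < s.card := by
    rw [degree_X_pow]
    exact_mod_cast (Nat.lt_succ_self k).trans hk
  have h := coeff_eq_sum hμ hdeg
  rw [coeff_X_pow, if_neg (by omega)] at h
  rw [h]
  refine Finset.sum_congr rfl fun j _ ↦ ?_
  rw [nodalWeight, Finset.prod_inv_distrib, eval_pow, eval_X, div_eq_inv_mul]

theorem exists_matrixOfGraph_cycleGraph_charpoly_eq {N : ℕ} (hN : 2 ≤ N) {P : ℝ[X]}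
    (hP : P.Monic) (hdeg : P.natDegree = N + 1) {μ : Fin N → ℝ} (hμ : Function.Injective μ)
    {s : ℝ} (hs : s ≠ 0) (hP₀ : ∀ j, P.eval (μ j) * Lagrange.nodalWeight Finset.univ μ j ≤ 0)
    (hPs : ∀ j, (P.eval (μ j) + 4 * s) * Lagrange.nodalWeight Finset.univ μ j ≤ 0) :
    ∃ A, MatrixOfGraph (cycleGraph (N + 1)) A ∧ A.charpoly = P := by
  let ω := Lagrange.nodalWeight Finset.univ μ
  have hω (j : Fin N) : ω j ≠ 0 := Lagrange.nodalWeight_ne_zero hμ.injOn (Finset.mem_univ j)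
  obtain ⟨x, y, hxy, hz⟩ : ∃ x y : Fin N → ℝ, (∀ j, x j * y j = s * ω j) ∧
      ∀ j, (x j + y j) ^ 2 = -(P.eval (μ j) * ω j) := by
    have hdisc (j : Fin N) : 0 ≤ -(P.eval (μ j) * ω j) - 4 * (s * ω j) := by
      linarith [hPs j]
    choose z hz using fun j ↦ (Real.isSquare_iff.mpr (neg_nonneg.mpr (hP₀ j)))
    choose r hr using fun j ↦ (Real.isSquare_iff.mpr (hdisc j))
    -- `x j` and `y j` are the roots of `X ^ 2 - z j * X + s * ω j`, of discriminant `r j ^ 2`.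
    refine ⟨fun j ↦ (z j + r j) / 2, fun j ↦ (z j - r j) / 2, fun j ↦ ?_, fun j ↦ ?_⟩
    · linear_combination (hz j - hr j) / (-4)
    · linear_combination -hz j
  have hxy0 (j : Fin N) : x j * y j ≠ 0 := hxy j ▸ mul_ne_zero hs (hω j)
  have hx (j : Fin N) : x j ≠ 0 := left_ne_zero_of_mul (hxy0 j)
  have hy : y ≠ 0 := fun h ↦ right_ne_zero_of_mul (hxy0 ⟨0, by omega⟩) (congrFun h _)
  have horth (k : ℕ) (hk : k + 1 < N) : ∑ j, x j * μ j ^ k * y j = 0 := by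
    simp_rw [mul_right_comm, hxy, mul_assoc, ← Finset.mul_sum]
    rw [sum_nodalWeight_mul_pow_eq_zero hμ.injOn (by simpa using hk), mul_zero]
  obtain ⟨Q, hQ, hJ, hQx, hQy⟩ := exists_orthogonal_matrixOfGraph_pathGraph hμ hx hy horth
  obtain ⟨a, ha⟩ := exists_charpoly_borderedMatrix_diagonal_eq hμ hP (by simpa using hdeg) hz
  have hQz (i : Fin N) : (Q *ᵥ (x + y)) i ≠ 0 ↔ (i : ℕ) = 0 ∨ (i : ℕ) + 1 = N := by
    rw [mulVec_add, Pi.add_apply, ← hQx, ← hQy]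
    have hends : (Q *ᵥ x) i = 0 ∨ (Q *ᵥ y) i = 0 := by
      by_contra! h
      have h0 := (hQx i).mp h.1
      have h1 := (hQy i).mp h.2
      omega
    obtain h | h := hends <;> simp [h]
  refine ⟨_, hJ.borderedMatrix_cycleGraph hN hQz a, ?_⟩
  rw [charpoly_reindex, charpoly_borderedMatrix_conj hQ]
  exact ha

end InverseEigenvalue

section DoubledSpectrum

open Polynomial

lemma neg_one_pow_card_neg_mul_prod {ι R : Type*} [CommRing R] [LinearOrder R]
    [IsStrictOrderedRing R] (s : Finset ι) (x : ι → R) :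
    (-1) ^ (s.filter fun i ↦ x i < 0).card * ∏ i ∈ s, x i = ∏ i ∈ s, |x i| := by
  have habs (i : ι) : |x i| = (if x i < 0 then -1 else 1) * x i := by
    split_ifs with h
    · rw [abs_of_neg h, neg_one_mul]
    · rw [abs_of_nonneg (not_lt.mp h), one_mul]
  simp_rw [habs, Finset.prod_mul_distrib, Finset.prod_ite, Finset.prod_const, one_pow, mul_one]

lemma neg_one_pow_mul_nodalWeight_pos {K : Type*} [Field K] [LinearOrder K] [IsStrictOrderedRing K]
    {N : ℕ} {μ : Fin N → K} (hμ : StrictMono μ) (j : Fin N) :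
    0 < (-1) ^ (N - 1 - j) * Lagrange.nodalWeight Finset.univ μ j := by
  have hneg : (Finset.univ.erase j).filter (fun i ↦ (μ j - μ i)⁻¹ < 0) = Finset.Ioi j := by
    ext i
    simpa [hμ.lt_iff_lt] using ne_of_gt
  have h := neg_one_pow_card_neg_mul_prod (Finset.univ.erase j) fun i ↦ (μ j - μ i)⁻¹
  rw [hneg, Fin.card_Ioi] at h
  rw [Lagrange.nodalWeight, h]
  refine Finset.prod_pos fun i hi ↦ abs_pos.mpr (inv_ne_zero (sub_ne_zero.mpr ?_))
  exact hμ.injective.ne (Finset.ne_of_mem_erase hi).symm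

/-- The monic polynomial of degree `n` with roots `0, 0, 2, 2, 4, 4, …`, the last root being simple
when `n` is odd; it is the characteristic polynomial prescribed on `C_n`. -/
noncomputable def doubledRootsPoly (n : ℕ) : ℝ[X] :=
  ∏ i ∈ Finset.range n, (X - C ((2 * (i / 2) : ℕ) : ℝ))

lemma doubledRootsPoly_monic (n : ℕ) : (doubledRootsPoly n).Monic :=
  monic_prod_X_sub_C _ _

lemma natDegree_doubledRootsPoly (n : ℕ) : (doubledRootsPoly n).natDegree = n := by
  rw [doubledRootsPoly, natDegree_finsetProd_X_sub_C_eq_card, Finset.card_range]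

lemma roots_doubledRootsPoly (n : ℕ) :
    (doubledRootsPoly n).roots = (Multiset.range n).map fun i ↦ ((2 * (i / 2) : ℕ) : ℝ) := by
  rw [doubledRootsPoly, ← roots_multiset_prod_X_sub_C (Multiset.map _ _), Multiset.map_map]
  rfl

lemma eval_doubledRootsPoly_of_even {n j : ℕ} (hj : Even j) (hjn : j < n) :
    (doubledRootsPoly n).eval (j : ℝ) = 0 := by
  rw [doubledRootsPoly, eval_prod]
  refine Finset.prod_eq_zero (Finset.mem_range.mpr hjn) ?_
  rw [Nat.two_mul_div_two_of_even hj, eval_sub, eval_X, eval_C, sub_self]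

lemma one_le_neg_one_pow_mul_eval_doubledRootsPoly {j : ℕ} (hj : Odd j) (n : ℕ) :
    1 ≤ (-1) ^ (n - 1 - j) * (doubledRootsPoly n).eval (j : ℝ) := by
  have hneg : (Finset.range n).filter (fun i ↦ (j : ℝ) - ((2 * (i / 2) : ℕ) : ℝ) < 0) =
      Finset.Ioo j n := by
    ext i
    rw [Finset.mem_filter, sub_neg, Nat.cast_lt, Finset.mem_range, Finset.mem_Ioo]
    obtain ⟨k, rfl⟩ := hj
    omega
  have h := neg_one_pow_card_neg_mul_prod (Finset.range n)
    fun i ↦ (j : ℝ) - ((2 * (i / 2) : ℕ) : ℝ)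
  rw [hneg, Nat.card_Ioo, Nat.sub_right_comm] at h
  simp only [doubledRootsPoly, eval_prod, eval_sub, eval_X, eval_C, h]
  refine Finset.one_le_prod fun i _ ↦ ?_
  have hne : (j : ℤ) - (2 * (i / 2) : ℕ) ≠ 0 := by
    obtain ⟨k, rfl⟩ := hj
    omega
  exact_mod_cast Int.one_le_abs hne

theorem exists_matrixOfGraph_cycleGraph_charpoly_eq_doubledRootsPoly {n : ℕ} (hn : 3 ≤ n) :
    ∃ A, MatrixOfGraph (cycleGraph n) A ∧ A.charpoly = doubledRootsPoly n := by
  obtain ⟨N, rfl⟩ : ∃ N, n = N + 1 := ⟨n - 1, by omega⟩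
  -- The path left after deleting a vertex of the cycle gets the spectrum `0, 1, …, N - 1`, which
  -- interlaces the doubled roots.
  have hμ : StrictMono fun j : Fin N ↦ ((j : ℕ) : ℝ) := Nat.strictMono_cast.comp Fin.val_strictMono
  have hsigns (j : Fin N) :
      (doubledRootsPoly (N + 1)).eval (j : ℝ) * Lagrange.nodalWeight Finset.univ (↑) j ≤ 0 ∧
        ((doubledRootsPoly (N + 1)).eval (j : ℝ) + (-1) ^ N) *
          Lagrange.nodalWeight Finset.univ (↑) j ≤ 0 := by
    obtain ⟨k, hk⟩ : ∃ k, N = j + 1 + k := ⟨N - 1 - j, by omega⟩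
    have hω := neg_one_pow_mul_nodalWeight_pos hμ j
    rw [show N - 1 - j = k by omega] at hω
    have hN : (-1 : ℝ) ^ N = (-1) ^ (j : ℕ) * -(-1) ^ k := by
      conv_lhs => rw [hk]
      ring
    obtain hj | hj := Nat.even_or_odd (j : ℕ)
    · rw [eval_doubledRootsPoly_of_even hj (by omega), hN, hj.neg_one_pow]
      constructor <;> linarith
    · have hP := one_le_neg_one_pow_mul_eval_doubledRootsPoly hj (N + 1)
      rw [show N + 1 - 1 - j = k + 1 by omega, pow_succ] at hP
      rw [hN, hj.neg_one_pow]
      obtain he | he := neg_one_pow_eq_or ℝ k <;> rw [he] at hω hP ⊢ <;>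
        constructor <;> nlinarith
  have hs : 4 * ((-1 : ℝ) ^ N / 4) = (-1) ^ N := by ring
  exact exists_matrixOfGraph_cycleGraph_charpoly_eq (by omega) (doubledRootsPoly_monic _)
    (natDegree_doubledRootsPoly _) hμ.injective (s := (-1) ^ N / 4) (by simp)
    (fun j ↦ (hsigns j).1) fun j ↦ by simpa only [hs] using (hsigns j).2

end DoubledSpectrum

section Nullity

lemma card_filter_range_div_two_eq {m : ℕ} (q : ℕ) (hq : 2 * q < m) :
    ((Finset.range m).filter fun i ↦ i / 2 = q).card = min (m - 2 * q) 2 := by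
  have hIco : (Finset.range m).filter (fun i ↦ i / 2 = q) =
      Finset.Ico (2 * q) (2 * q + min (m - 2 * q) 2) := by
    ext i
    rw [Finset.mem_filter, Finset.mem_range, Finset.mem_Ico]
    omega
  rw [hIco, Nat.card_Ico, Nat.add_sub_cancel_left]

lemma count_roots_doubledRootsPoly {i m : ℕ} (hi : i < m) :
    (doubledRootsPoly m).roots.count ((2 * (i / 2) : ℕ) : ℝ) = min (m - 2 * (i / 2)) 2 := by
  rw [roots_doubledRootsPoly, Multiset.count_map, ← card_filter_range_div_two_eq _ (by omega)]
  simp [Finset.card, Finset.range, eq_comm]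

lemma sum_map_count_roots_doubledRootsPoly {n m : ℕ} (hnm : n ≤ m) :
    ((doubledRootsPoly n).roots.map fun t ↦ (doubledRootsPoly m).roots.count t).sum =
      ∑ i ∈ Finset.range n, min (m - 2 * (i / 2)) 2 := by
  rw [roots_doubledRootsPoly n, Multiset.map_map]
  exact Finset.sum_congr rfl fun i hi ↦
    count_roots_doubledRootsPoly ((Finset.mem_range.mp hi).trans_le hnm)

lemma sum_range_min_two_of_odd {n : ℕ} (hn : Odd n) :
    ∑ i ∈ Finset.range n, min (n - 2 * (i / 2)) 2 = 2 * n - 1 := by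
  obtain ⟨r, rfl⟩ := hn
  have hlt : ∀ i ∈ Finset.range (2 * r), min (2 * r + 1 - 2 * (i / 2)) 2 = 2 := by
    intro i hi
    rw [Finset.mem_range] at hi
    omega
  rw [Finset.sum_range_succ, Finset.sum_congr rfl hlt, Finset.sum_const, Finset.card_range,
    smul_eq_mul]
  omega

lemma sum_range_min_two_of_not_eq_and_odd {n m : ℕ} (hnm : n ≤ m) (h : ¬(m = n ∧ Odd n)) :
    ∑ i ∈ Finset.range n, min (m - 2 * (i / 2)) 2 = 2 * n := by
  have htwo : ∀ i ∈ Finset.range n, min (m - 2 * (i / 2)) 2 = 2 := by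
    intro i hi
    rw [Finset.mem_range] at hi
    rw [Nat.odd_iff] at h
    omega
  rw [Finset.sum_congr rfl htwo, Finset.sum_const, Finset.card_range, smul_eq_mul, mul_comm]

theorem exists_matrixOfGraph_cycleGraph_boxProd_nullity_eq {n m : ℕ} (hn : 3 ≤ n) (hnm : n ≤ m) :
    ∃ A, MatrixOfGraph (cycleGraph n □ cycleGraph m) A ∧
      nullity A = ∑ i ∈ Finset.range n, min (m - 2 * (i / 2)) 2 := by
  obtain ⟨A, hA, hAp⟩ := exists_matrixOfGraph_cycleGraph_charpoly_eq_doubledRootsPoly hn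
  obtain ⟨B, hB, hBp⟩ :=
    exists_matrixOfGraph_cycleGraph_charpoly_eq_doubledRootsPoly (hn.trans hnm)
  refine ⟨_, hA.kronecker_one_sub_one_kronecker hB, ?_⟩
  rw [nullity_kronecker_one_sub_one_kronecker (Matrix.isHermitian_iff_isSymm.2 hA.1)
    (Matrix.isHermitian_iff_isSymm.2 hB.1), hAp, hBp, sum_map_count_roots_doubledRootsPoly hnm]

end Nullity

section ZeroForcing

open scoped Fin.CommRing

lemma cycleGraph_adj_iff {n : ℕ} [NeZero n] (hn : 2 ≤ n) {u v : Fin n} :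
    (cycleGraph n).Adj u v ↔ v = u + 1 ∨ v = u - 1 := by
  obtain ⟨k, rfl⟩ := Nat.exists_eq_add_of_le' hn
  rw [cycleGraph_adj, or_comm, sub_eq_iff_eq_add', sub_eq_iff_eq_add', eq_sub_iff_add_eq,
    eq_comm (a := u)]

lemma ZFClosure.boxProd_cycleGraph_right {G : SimpleGraph V} {m : ℕ} [NeZero m] (hm : 2 ≤ m)
    {B : Set (V × Fin m)} {v : V} {b : Fin m} (hb : ZFClosure (G □ cycleGraph m) B (v, b))
    (hprev : ZFClosure (G □ cycleGraph m) B (v, b - 1))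
    (hG : ∀ w, G.Adj v w → ZFClosure (G □ cycleGraph m) B (w, b)) :
    ZFClosure (G □ cycleGraph m) B (v, b + 1) := by
  refine .force (v, b) (v, b + 1) hb (boxProd_adj_right.2 ((cycleGraph_adj_iff hm).2 (.inl rfl))) ?_
  rintro ⟨w, c⟩ hadj hne
  obtain ⟨hvw, rfl⟩ | ⟨hbc, rfl⟩ := boxProd_adj.1 hadj
  · exact hG w hvw
  · obtain rfl | rfl := (cycleGraph_adj_iff hm).1 hbc
    · exact absurd rfl hne
    · exact hprev

lemma ZFClosure.cycleGraph_boxProd_left {H : SimpleGraph V} {n : ℕ} [NeZero n] (hn : 2 ≤ n)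
    {B : Set (Fin n × V)} {a ε : Fin n} (hε : ε = 1 ∨ ε = -1) {w : V}
    (ha : ZFClosure (cycleGraph n □ H) B (a, w))
    (hprev : ZFClosure (cycleGraph n □ H) B (a - ε, w))
    (hH : ∀ x, H.Adj w x → ZFClosure (cycleGraph n □ H) B (a, x)) :
    ZFClosure (cycleGraph n □ H) B (a + ε, w) := by
  have hadj_iff (c : Fin n) : (cycleGraph n).Adj a c ↔ c = a + ε ∨ c = a - ε := by
    obtain rfl | rfl := hε
    · exact cycleGraph_adj_iff hn
    · rw [cycleGraph_adj_iff hn, sub_neg_eq_add, ← sub_eq_add_neg, or_comm]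
  refine .force (a, w) (a + ε, w) ha (boxProd_adj_left.2 ((hadj_iff _).2 (.inl rfl))) ?_
  rintro ⟨c, x⟩ hadj hne
  obtain ⟨hac, rfl⟩ | ⟨hwx, rfl⟩ := boxProd_adj.1 hadj
  · obtain rfl | rfl := (hadj_iff c).1 hac
    · exact absurd rfl hne
    · exact hprev
  · exact hH x hwx

lemma isZeroForcingSet_boxProd_cycleGraph {G : SimpleGraph V} {m : ℕ} [NeZero m] (hm : 2 ≤ m)
    {B : Set (V × Fin m)} {c : Fin m}
    (hc : ∀ v, ZFClosure (G □ cycleGraph m) B (v, c))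
    (hc' : ∀ v, ZFClosure (G □ cycleGraph m) B (v, c + 1)) :
    IsZeroForcingSet (G □ cycleGraph m) B := by
  have hcols (k : ℕ) (v : V) : ZFClosure (G □ cycleGraph m) B (v, c + k) := by
    induction k using Nat.twoStepInduction generalizing v with
    | zero => simpa using hc v
    | one => simpa using hc' v
    | more k ih ih' =>
      rw [show c + (k + 2 : ℕ) = c + (k + 1 : ℕ) + 1 by push_cast; ring]
      refine .boxProd_cycleGraph_right hm (ih' v) ?_ fun w _ ↦ ih' w
      rw [show c + (k + 1 : ℕ) - 1 = c + k by push_cast; ring]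
      exact ih v
  rintro ⟨v, b⟩
  simpa using hcols (b - c).val v

lemma exists_isZeroForcingSet_boxProd_cycleGraph [Fintype V] (G : SimpleGraph V) {m : ℕ}
    (hm : 2 ≤ m) : ∃ B : Finset (V × Fin m), B.card = 2 * Fintype.card V ∧
      IsZeroForcingSet (G □ cycleGraph m) ↑B := by
  have : NeZero m := ⟨by omega⟩
  have : Nontrivial (Fin m) := Fin.nontrivial_iff_two_le.2 hm
  refine ⟨Finset.univ ×ˢ {0, 1}, ?_, isZeroForcingSet_boxProd_cycleGraph hm (c := 0)
    (fun v ↦ .init _ ?_) fun v ↦ .init _ ?_⟩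
  · rw [Finset.card_product, Finset.card_univ, Finset.card_pair zero_ne_one, mul_comm]
  all_goals simp

lemma ZFClosure.cycleGraph_boxProd_triangle {n : ℕ} [NeZero n] (hn : 2 ≤ n)
    {B : Set (Fin n × Fin n)} {ε : Fin n} (hε : ε = 1 ∨ ε = -1)
    (hrow₀ : ∀ b, ZFClosure (cycleGraph n □ cycleGraph n) B (0, b))
    (hrow₁ : ∀ b ≠ 0, ZFClosure (cycleGraph n □ cycleGraph n) B (ε, b))
    {d b : ℕ} (hdb : d ≤ b) (hbd : b + d ≤ n) :
    ZFClosure (cycleGraph n □ cycleGraph n) B (d * ε, b) := by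
  induction d using Nat.twoStepInduction generalizing b with
  | zero => simpa using hrow₀ b
  | one =>
    have hb : (b : Fin n) ≠ 0 := by
      rw [Ne, Fin.natCast_eq_zero]
      exact Nat.not_dvd_of_pos_of_lt hdb hbd
    simpa using hrow₁ b hb
  | more d ih ih' =>
    obtain ⟨b, rfl⟩ := Nat.exists_eq_add_of_le' (one_le_two.trans (Nat.le_of_add_left_le hdb))
    rw [show ((d + 2 : ℕ) : Fin n) * ε = (d + 1 : ℕ) * ε + ε by push_cast; ring]
    refine .cycleGraph_boxProd_left hn hε (ih' (by omega) (by omega)) ?_ fun x hx ↦ ?_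
    · rw [show ((d + 1 : ℕ) : Fin n) * ε - ε = d * ε by push_cast; ring]
      exact ih (by omega) (by omega)
    · obtain rfl | rfl := (cycleGraph_adj_iff hn).1 hx
      · exact_mod_cast ih' (b := b + 1 + 1) (by omega) (by omega)
      · rw [show ((b + 1 : ℕ) : Fin n) - 1 = b by push_cast; ring]
        exact ih' (by omega) (by omega)

lemma exists_natCast_eq_or_eq_neg {n : ℕ} [NeZero n] (a : Fin n) :
    ∃ d ≤ n / 2, a = (d : Fin n) ∨ a = -(d : Fin n) := by
  obtain ha | ha := le_or_gt a.val (n / 2)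
  · exact ⟨a, ha, .inl (Fin.cast_val_eq_self a).symm⟩
  · refine ⟨n - a, by omega, .inr ?_⟩
    rw [Nat.cast_sub a.is_lt.le, Fin.natCast_self, zero_sub, neg_neg, Fin.cast_val_eq_self]

lemma exists_isZeroForcingSet_cycleGraph_boxProd_self_of_odd {n : ℕ} (hn : 2 ≤ n) (hodd : Odd n) :
    ∃ B : Finset (Fin n × Fin n), B.card = 2 * n - 1 ∧
      IsZeroForcingSet (cycleGraph n □ cycleGraph n) ↑B := by
  have : NeZero n := ⟨by omega⟩
  have : Nontrivial (Fin n) := Fin.nontrivial_iff_two_le.2 hn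
  let B : Finset (Fin n × Fin n) := ({0, 1} ×ˢ Finset.univ).erase (1, 0)
  let K := ZFClosure (cycleGraph n □ cycleGraph n) (B : Set (Fin n × Fin n))
  have hrow₀ (b : Fin n) : K (0, b) := .init _ (by simp [B])
  have hrow₁ (b : Fin n) (hb : b ≠ 0) : K (1, b) := .init _ (by simp [B, hb])
  have hrow_neg (b : Fin n) (hb : b ≠ 0) : K (-1, b) := by
    rw [← zero_add (-1 : Fin n)]
    refine .cycleGraph_boxProd_left hn (.inr rfl) (hrow₀ b) ?_ fun x _ ↦ hrow₀ x
    simpa using hrow₁ b hb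
  refine ⟨B, ?_, ?_⟩
  · rw [Finset.card_erase_of_mem (by simp), Finset.card_product, Finset.card_pair zero_ne_one,
      Finset.card_univ, Fintype.card_fin]
  obtain ⟨r, rfl⟩ := hodd
  have hcol {b : ℕ} (hrb : r ≤ b) (hbr : b ≤ r + 1) (a : Fin (2 * r + 1)) : K (a, b) := by
    obtain ⟨d, hd, rfl | rfl⟩ := exists_natCast_eq_or_eq_neg a
    · simpa using ZFClosure.cycleGraph_boxProd_triangle hn (.inl rfl) hrow₀ hrow₁
        (b := b) (d := d) (by omega) (by omega)
    · simpa using ZFClosure.cycleGraph_boxProd_triangle hn (.inr rfl) hrow₀ hrow_neg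
        (b := b) (d := d) (by omega) (by omega)
  refine isZeroForcingSet_boxProd_cycleGraph hn (hcol le_rfl r.le_succ) ?_
  exact_mod_cast hcol r.le_succ le_rfl

end ZeroForcing

/-- For `m ≥ n ≥ 3`, `M(C_n □ C_m) = Z(C_n □ C_m) = 2n−1` if `m = n`
with `n` odd, and `= 2n` otherwise. -/
theorem stmt7 (n m : ℕ) (hn : 3 ≤ n) (hm : n ≤ m) :
    (m = n ∧ Odd n →
      maxNullity ((cycleGraph n).boxProd (cycleGraph m)) = 2 * n - 1 ∧
      zeroForcingNumber ((cycleGraph n).boxProd (cycleGraph m)) = 2 * n - 1) ∧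
    (¬(m = n ∧ Odd n) →
      maxNullity ((cycleGraph n).boxProd (cycleGraph m)) = 2 * n ∧
      zeroForcingNumber ((cycleGraph n).boxProd (cycleGraph m)) = 2 * n) := by
  obtain ⟨A, hA, hnull⟩ := exists_matrixOfGraph_cycleGraph_boxProd_nullity_eq hn hm
  refine ⟨?_, fun h ↦ ?_⟩
  · rintro ⟨rfl, hodd⟩
    obtain ⟨B, hcard, hB⟩ :=
      exists_isZeroForcingSet_cycleGraph_boxProd_self_of_odd (by omega) hodd
    exact maxNullity_eq_and_zeroForcingNumber_eq hA
      (hnull.trans (sum_range_min_two_of_odd hodd)) hB hcard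
  · obtain ⟨B, hcard, hB⟩ :=
      exists_isZeroForcingSet_boxProd_cycleGraph (cycleGraph n) (m := m) (by omega)
    rw [Fintype.card_fin] at hcard
    exact maxNullity_eq_and_zeroForcingNumber_eq hA
      (hnull.trans (sum_range_min_two_of_not_eq_and_odd hm h)) hB hcard

end PaperPD
end

section
/- For all n, m ≥ 3, Z(C_n □ C_m) ≤ 2n; in fact the vertex set of two consecutive copies of C_n (i.e., all vertices (g,h) with h ranging over two adjacent vertices of C_m) is a zero forcing set of C_n □ C_m. -/
namespace PaperPD

open SimpleGraph

variable {V α β : Type*}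

/-! A zero forcing set of `H` forces every copy of `H` in `G □ H` simultaneously: when the copy of a
vertex `u` of `H` forces, the whole layer `G × {u}` is already blue, so only its neighbours in the
`H`-direction can be white. In a connected graph of maximum degree at most two, a blue edge pushes
itself along any walk, since its second endpoint has at most one neighbour other than the first. -/

section ZeroForcing

variable {G : SimpleGraph V} {H : SimpleGraph α}

theorem isZeroForcingSet_univ (G : SimpleGraph V) : IsZeroForcingSet G Set.univ :=
  fun v => .init v (Set.mem_univ v)

theorem IsZeroForcingSet.zeroForcingNumber_le_card [Fintype V] {B : Finset V}
    (hB : IsZeroForcingSet G ↑B) : zeroForcingNumber G ≤ B.card :=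
  Nat.sInf_le ⟨B, rfl, hB⟩

theorem exists_card_eq_zeroForcingNumber [Fintype V] (G : SimpleGraph V) :
    ∃ B : Finset V, B.card = zeroForcingNumber G ∧ IsZeroForcingSet G ↑B :=
  Nat.sInf_mem (s := {k | ∃ B : Finset V, B.card = k ∧ IsZeroForcingSet G ↑B})
    ⟨_, Finset.univ, rfl, by simpa only [Finset.coe_univ] using isZeroForcingSet_univ G⟩

theorem ZFClosure.boxProd {B : Set α} {y : α} (hy : ZFClosure H B y) (x : V) :
    ZFClosure (G.boxProd H) (Prod.snd ⁻¹' B) (x, y) := by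
  induction hy generalizing x with
  | init y hy => exact .init _ hy
  | force u w _ huw _ ihu ih =>
    refine .force (x, u) (x, w) (ihu x) (boxProd_adj_right.mpr huw) ?_
    rintro ⟨x', y⟩ hadj hne
    obtain ⟨-, rfl⟩ | ⟨huy, rfl⟩ := boxProd_adj.mp hadj
    · exact ihu x'
    · exact ih y huy (fun hyw => hne (congrArg (Prod.mk x) hyw)) x

theorem IsZeroForcingSet.boxProd {B : Set α} (hB : IsZeroForcingSet H B) (G : SimpleGraph V) :
    IsZeroForcingSet (G.boxProd H) (Prod.snd ⁻¹' B) :=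
  fun p => (hB p.2).boxProd p.1

theorem zeroForcingNumber_boxProd_le [Fintype V] [Fintype α] (G : SimpleGraph V)
    (H : SimpleGraph α) :
    zeroForcingNumber (G.boxProd H) ≤ Fintype.card V * zeroForcingNumber H := by
  obtain ⟨B, hcard, hB⟩ := exists_card_eq_zeroForcingNumber H
  have hlift : IsZeroForcingSet (G.boxProd H) ↑(Finset.univ ×ˢ B : Finset (V × α)) := by
    simpa only [Finset.coe_product, Finset.coe_univ, Set.univ_prod] using hB.boxProd G
  simpa only [Finset.card_product, Finset.card_univ, hcard] using hlift.zeroForcingNumber_le_card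

end ZeroForcing

section DegreeLeTwo

variable {H : SimpleGraph V} [H.LocallyFinite] {B : Set V} {u v w : V}

theorem ZFClosure.of_adj_of_degree_le_two (hdeg : H.degree v ≤ 2) (hu : ZFClosure H B u)
    (hv : ZFClosure H B v) (huv : H.Adj u v) (hvw : H.Adj v w) : ZFClosure H B w := by
  obtain rfl | hwu := eq_or_ne w u
  · exact hu
  refine .force v w hv hvw fun x hvx hxw => ?_
  suffices x = u from this ▸ hu
  by_contra hxu
  have : 2 < H.degree v := Finset.two_lt_card.mpr
    ⟨u, by simpa using huv.symm, w, by simpa using hvw, x, by simpa using hvx,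
      hwu.symm, Ne.symm hxu, hxw.symm⟩
  omega

theorem ZFClosure.of_walk_of_degree_le_two (hdeg : ∀ v, H.degree v ≤ 2) (hu : ZFClosure H B u)
    (hv : ZFClosure H B v) (huv : H.Adj u v) (p : H.Walk v w) : ZFClosure H B w := by
  induction p generalizing u with
  | nil => exact hv
  | cons hvx _ ih => exact ih hv (hu.of_adj_of_degree_le_two (hdeg _) hv huv hvx) hvx

theorem isZeroForcingSet_pair_of_degree_le_two (hconn : H.Preconnected)
    (hdeg : ∀ v, H.degree v ≤ 2) (huv : H.Adj u v) : IsZeroForcingSet H {u, v} := fun w =>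
  have ⟨p⟩ := hconn v w
  .of_walk_of_degree_le_two hdeg (.init u (.inl rfl)) (.init v (.inr rfl)) huv p

theorem zeroForcingNumber_le_two_of_degree_le_two [Fintype V] (hconn : H.Preconnected)
    (hdeg : ∀ v, H.degree v ≤ 2) : zeroForcingNumber H ≤ 2 := by
  classical
  obtain rfl | hne := eq_or_ne H ⊥
  · have : Subsingleton V := preconnected_bot_iff_subsingleton.mp hconn
    have huniv : IsZeroForcingSet (⊥ : SimpleGraph V) ↑(Finset.univ : Finset V) := by
      simpa only [Finset.coe_univ] using isZeroForcingSet_univ ⊥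
    exact huniv.zeroForcingNumber_le_card.trans
      (Fintype.card_le_one_iff_subsingleton.mpr this |>.trans one_le_two)
  · obtain ⟨u, v, huv⟩ := ne_bot_iff_exists_adj.mp hne
    have hpair : IsZeroForcingSet H ↑({u, v} : Finset V) := by
      simpa only [Finset.coe_pair] using isZeroForcingSet_pair_of_degree_le_two hconn hdeg huv
    exact hpair.zeroForcingNumber_le_card.trans Finset.card_le_two

end DegreeLeTwo

theorem cycleGraph_degree_le_two (n : ℕ) (v : Fin n) : (cycleGraph n).degree v ≤ 2 := by
  match n with
  | 0 => exact v.elim0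
  | 1 => exact (degree_lt_card_verts v).le.trans one_le_two
  | n + 2 => exact cycleGraph_degree_two_le.trans_le Finset.card_le_two

theorem stmt8_general [Fintype V] [Fintype α] (G : SimpleGraph V) {H : SimpleGraph α}
    [H.LocallyFinite] (hconn : H.Preconnected) (hdeg : ∀ v, H.degree v ≤ 2) :
    (∀ h h' : α, H.Adj h h' →
      IsZeroForcingSet (G.boxProd H) {p : V × α | p.2 = h ∨ p.2 = h'}) ∧
    zeroForcingNumber (G.boxProd H) ≤ 2 * Fintype.card V := by
  refine ⟨fun h h' hadj => (isZeroForcingSet_pair_of_degree_le_two hconn hdeg hadj).boxProd G, ?_⟩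
  calc zeroForcingNumber (G.boxProd H)
      ≤ Fintype.card V * zeroForcingNumber H := zeroForcingNumber_boxProd_le G H
    _ ≤ Fintype.card V * 2 :=
      Nat.mul_le_mul_left _ (zeroForcingNumber_le_two_of_degree_le_two hconn hdeg)
    _ = 2 * Fintype.card V := Nat.mul_comm _ _

/-- For `n, m ≥ 3`, the vertices of two consecutive copies of `C_n`
form a zero forcing set of `C_n □ C_m`; in particular `Z(C_n □ C_m) ≤ 2n`. -/
theorem stmt8 (n m : ℕ) (hn : 3 ≤ n) (hm : 3 ≤ m) :
    (∀ h h' : Fin m, (cycleGraph m).Adj h h' →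
      IsZeroForcingSet ((cycleGraph n).boxProd (cycleGraph m))
        {p : Fin n × Fin m | p.2 = h ∨ p.2 = h'}) ∧
    zeroForcingNumber ((cycleGraph n).boxProd (cycleGraph m)) ≤ 2 * n := by
  simpa only [Fintype.card_fin] using
    stmt8_general (cycleGraph n) cycleGraph_preconnected (cycleGraph_degree_le_two m)

end PaperPD
end

section
/- For m ≥ n ≥ 3, the power domination number of the Cartesian product of cycles satisfies ⌈n/2⌉ ≤ γ_P(C_n □ C_m). -/
namespace PaperPD

open SimpleGraph

variable {V α β : Type*}

/-!
A power dominating set `S` yields a zero forcing set with at most `Δ |S|` vertices, so it suffices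
to show that the zero forcing number of `G □ H` is at least `2 n - 1`, for 2-connected `G` and `H`
on `n ≤ m` vertices. Cycles are 2-connected and `Δ = 4` for the product of two of them.

Run the process one force at a time, and let `B` be the set of blue vertices and `U` the set of
vertices that have performed a force. Since `N[U] ⊆ B`, the set `B \ U` separates `U` from the
complement of `B`; its size never changes. If it is at most `2 n - 2`, some column meets `B \ U` at
most once, and as `H` is 2-connected such a light column either avoids `U` or lies in `B`.
The first alternative holds at the start, and at the end the second does. A force which switches
between them needs a light column of each kind. Counting `B \ U` by rows then shows that it has
exactly `2 m - 2` elements, hence `n = m`, and that the rows are as extremal as the columns: every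
vertex of `B \ U` turns out to have two neighbors outside `B`, so none of them can force.
-/

section ZeroForcing

theorem IsZeroForcingSet.exists_force {G : SimpleGraph V} {S X : Set V}
    (hS : IsZeroForcingSet G S) (hSX : S ⊆ X) (hX : X ≠ Set.univ) :
    ∃ u ∈ X, ∃ w ∉ X, G.Adj u w ∧ ∀ x, G.Adj u x → x ≠ w → x ∈ X := by
  by_contra! stuck
  refine hX (Set.eq_univ_of_forall fun v => ?_)
  induction hS v with
  | init v hv => exact hSX hv
  | force u w _ huw _ hu hx =>
    by_contra hw
    obtain ⟨x, hux, hxw, hxX⟩ := stuck u hu w hw huw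
    exact hxX (hx x hux hxw)

variable {G : SimpleGraph V} [DecidableEq V] {B₀ U B : Finset V}

/-- A stage of the zero forcing process started from `B₀`, one force at a time: `B` is the set of
blue vertices and `U` the set of spent ones, those that have already performed a force. -/
inductive ForcingStage (G : SimpleGraph V) (B₀ : Finset V) : Finset V → Finset V → Prop
  | init : ForcingStage G B₀ ∅ B₀
  | force {U B : Finset V} {u w : V} (stage : ForcingStage G B₀ U B) (hu : u ∈ B) (hw : w ∉ B)
      (huw : G.Adj u w) (h : ∀ x, G.Adj u x → x ≠ w → x ∈ B) :
      ForcingStage G B₀ (insert u U) (insert w B)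

namespace ForcingStage

theorem subset (hs : ForcingStage G B₀ U B) : B₀ ⊆ B := by
  induction hs with
  | init => exact subset_rfl
  | force _ _ _ _ _ ih => exact ih.trans (Finset.subset_insert _ _)

theorem closedNbhd_subset (hs : ForcingStage G B₀ U B) : closedNbhd G ↑U ⊆ ↑B := by
  induction hs with
  | init => simp [closedNbhd]
  | @force U B u w _ hu _ huw h ih =>
    rintro v (hv | ⟨x, hx, hxv⟩)
    · rcases Finset.mem_insert.1 hv with rfl | hv
      · exact Finset.mem_insert_of_mem hu
      · exact Finset.mem_insert_of_mem (ih (Or.inl hv))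
    · rcases Finset.mem_insert.1 hx with rfl | hx
      · by_cases hvw : v = w
        · exact hvw ▸ Finset.mem_insert_self v B
        · exact Finset.mem_insert_of_mem (h v hxv hvw)
      · exact Finset.mem_insert_of_mem (ih (Or.inr ⟨x, hx, hxv⟩))

theorem notMem_of_adj_notMem (hs : ForcingStage G B₀ U B) {u w : V} (huw : G.Adj u w)
    (hw : w ∉ B) : u ∉ U :=
  fun hu => hw (hs.closedNbhd_subset (Or.inr ⟨u, hu, huw⟩))

theorem card_sdiff (hs : ForcingStage G B₀ U B) : (B \ U).card = B₀.card := by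
  have card_add : U.card + B₀.card = B.card := by
    induction hs with
    | init => simp
    | force hs _ hw huw _ ih =>
      rw [Finset.card_insert_of_notMem (hs.notMem_of_adj_notMem huw hw),
        Finset.card_insert_of_notMem hw]
      omega
  have hUB : U ⊆ B := fun v hv => hs.closedNbhd_subset (Or.inl hv)
  rw [Finset.card_sdiff_of_subset hUB]
  omega

end ForcingStage

theorem IsZeroForcingSet.exists_forcingStage_univ [Fintype V]
    (hB₀ : IsZeroForcingSet G ↑B₀) : ∃ U, ForcingStage G B₀ U Finset.univ := by
  obtain ⟨B, ⟨U, hs⟩, hmax⟩ :=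
    (Set.toFinite {B | ∃ U, ForcingStage G B₀ U B}).exists_maximal ⟨B₀, ∅, .init⟩
  suffices hB : B = Finset.univ from ⟨U, hB ▸ hs⟩
  by_contra hB
  obtain ⟨u, hu, w, hw, huw, h⟩ :=
    hB₀.exists_force (Finset.coe_subset.2 hs.subset) (Finset.coe_eq_univ.not.2 hB)
  exact hw (hmax ⟨_, hs.force hu hw huw h⟩ (Finset.subset_insert w B) (Finset.mem_insert_self w B))

end ZeroForcing

section PowerDomination

theorem deg_eq_degree (G : SimpleGraph V) (v : V) [Fintype (G.neighborSet v)] :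
    deg G v = G.degree v := by
  rw [deg, Set.ncard_eq_toFinset_card', Set.toFinset_card, card_neighborSet_eq_degree]

theorem IsZeroForcingSet.of_forall_zfClosure {G : SimpleGraph V} {S T : Set V}
    (hS : IsZeroForcingSet G S) (hST : ∀ v ∈ S, ZFClosure G T v) : IsZeroForcingSet G T := by
  intro v
  induction hS v with
  | init v hv => exact hST v hv
  | force u w _ huw _ hu hx => exact .force u w hu huw hx

variable {G : SimpleGraph V} [Fintype V]

theorem deg_le_maxDeg (v : V) : deg G v ≤ maxDeg G :=
  Finset.le_sup (f := deg G) (Finset.mem_univ v)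

theorem exists_isPowerDominatingSet_card (G : SimpleGraph V) :
    ∃ S : Finset V, S.card = powerDominationNumber G ∧ IsPowerDominatingSet G ↑S :=
  Nat.sInf_mem (s := {k | ∃ S : Finset V, S.card = k ∧ IsPowerDominatingSet G ↑S})
    ⟨_, Finset.univ, rfl, fun v => .init v (Or.inl (by simp))⟩

theorem exists_isZeroForcingSet_card (G : SimpleGraph V) :
    ∃ B : Finset V, B.card = zeroForcingNumber G ∧ IsZeroForcingSet G ↑B :=
  Nat.sInf_mem (s := {k | ∃ B : Finset V, B.card = k ∧ IsZeroForcingSet G ↑B})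
    ⟨_, Finset.univ, rfl, fun v => .init v (by simp)⟩

/-- Each vertex `u` of a power dominating set can be made to force one of its neighbors `f u`, so
it suffices to color the other `deg u` vertices of its closed neighborhood. -/
theorem zeroForcingNumber_le_maxDeg_mul_powerDominationNumber (hG : ∀ v, ∃ w, G.Adj v w) :
    zeroForcingNumber G ≤ maxDeg G * powerDominationNumber G := by
  classical
  choose f hf using hG
  obtain ⟨S, hcard, hS⟩ := exists_isPowerDominatingSet_card G
  let N (u : V) : Finset V := insert u ((G.neighborFinset u).erase (f u))
  have card_N (u : V) : (N u).card ≤ maxDeg G := by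
    have hfu : f u ∈ G.neighborFinset u := by simpa using hf u
    calc (N u).card ≤ ((G.neighborFinset u).erase (f u)).card + 1 := Finset.card_insert_le _ _
      _ = G.degree u := Finset.card_erase_add_one hfu
      _ ≤ maxDeg G := deg_eq_degree G u ▸ deg_le_maxDeg u
  have N_closure {u : V} (hu : u ∈ S) {v : V} (hv : v ∈ N u) :
      ZFClosure G ↑(S.biUnion N) v :=
    .init v (Finset.mem_biUnion.2 ⟨u, hu, hv⟩)
  have forced {u : V} (hu : u ∈ S) : ∀ x, G.Adj u x → x ≠ f u → ZFClosure G ↑(S.biUnion N) x :=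
    fun x hux hx => N_closure hu (by simp [N, hux, hx])
  have hN : IsZeroForcingSet G ↑(S.biUnion N) := by
    refine IsZeroForcingSet.of_forall_zfClosure hS ?_
    have self {u : V} (hu : u ∈ S) : ZFClosure G ↑(S.biUnion N) u := N_closure hu (by simp [N])
    rintro v (hv | ⟨u, hu, huv⟩)
    · exact self hv
    · by_cases hvf : v = f u
      · exact .force u v (self hu) huv (hvf ▸ forced hu)
      · exact forced hu v huv hvf
  calc zeroForcingNumber G ≤ (S.biUnion N).card := Nat.sInf_le ⟨_, rfl, hN⟩
    _ ≤ S.card * maxDeg G := Finset.card_biUnion_le_card_mul S N _ fun u _ => card_N u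
    _ = maxDeg G * powerDominationNumber G := by rw [hcard, mul_comm]

end PowerDomination

/-- A graph is 2-connected if it has at least three vertices and deleting fewer than two of them
leaves it connected. -/
structure IsTwoConnected [Fintype V] (G : SimpleGraph V) : Prop where
  three_le_card : 3 ≤ Fintype.card V
  preconnected_induce_compl : ∀ s : Set V, s.Subsingleton → (G.induce sᶜ).Preconnected

namespace IsTwoConnected

variable [Fintype V] {G : SimpleGraph V}

theorem exists_adj_crossing (hG : IsTwoConnected G) {s A : Set V} (hs : s.Subsingleton) {a b : V}
    (ha : a ∈ A) (has : a ∉ s) (hb : b ∉ A) (hbs : b ∉ s) :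
    ∃ x ∈ A, ∃ y ∉ A, x ∉ s ∧ y ∉ s ∧ G.Adj x y := by
  obtain ⟨p⟩ := hG.preconnected_induce_compl s hs ⟨a, has⟩ ⟨b, hbs⟩
  obtain ⟨⟨⟨x, y⟩, hxy⟩, -, hx, hy⟩ := p.exists_boundary_dart (Subtype.val ⁻¹' A) ha hb
  exact ⟨x, hx, y, hy, x.2, y.2, hxy⟩

theorem exists_adj_ne (hG : IsTwoConnected G) (v z : V) : ∃ w ≠ z, G.Adj v w := by
  classical
  obtain ⟨b, hb⟩ : ∃ b, b ∉ ({v, z} : Finset V) := by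
    by_contra! h
    have := Finset.card_le_two (a := v) (b := z)
    rw [Finset.eq_univ_of_forall h, Finset.card_univ] at this
    exact absurd hG.three_le_card (by omega)
  simp only [Finset.mem_insert, Finset.mem_singleton, not_or] at hb
  obtain ⟨x, rfl, w, -, -, hw, hvw⟩ := hG.exists_adj_crossing (A := {v}) (s := {z} \ {v})
    (Set.subsingleton_singleton.anti Set.sdiff_subset) rfl (by simp) hb.1 (by simp [hb.2])
  exact ⟨w, fun hwz => hw ⟨hwz, hvw.ne'⟩, hvw⟩

variable [DecidableEq V] {U B : Finset V} {x y : V}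

theorem two_le_card_sdiff (hG : IsTwoConnected G) (hUB : closedNbhd G ↑U ⊆ ↑B)
    (hx : x ∈ U) (hy : y ∉ B) : 2 ≤ (B \ U).card := by
  by_contra! h
  have hs : ((B \ U : Finset V) : Set V).Subsingleton :=
    Finset.card_le_one_iff_subsingleton.1 (Nat.le_of_lt_succ h)
  obtain ⟨a, ha, b, hb, -, hbs, hab⟩ := hG.exists_adj_crossing hs (A := ↑U) hx
    (by simp [hx]) (fun hyU => hy (hUB (Or.inl hyU))) (by simp [hy])
  exact hbs (Finset.mem_sdiff.2 ⟨hUB (Or.inr ⟨a, ha, hab⟩), hb⟩)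

theorem exists_adj_notMem (hG : IsTwoConnected G) (hUB : closedNbhd G ↑U ⊆ ↑B)
    (hx : x ∈ U) (hy : y ∉ B) (hcard : (B \ U).card ≤ 2) {t : V} (ht : t ∈ B \ U) :
    ∃ w ∉ B, G.Adj t w := by
  have hs : (((B \ U).erase t : Finset V) : Set V).Subsingleton := by
    rw [← Finset.card_le_one_iff_subsingleton, Finset.card_erase_of_mem ht]
    omega
  obtain ⟨a, ha, b, hb, has, -, hab⟩ := hG.exists_adj_crossing hs (A := ↑B) (hUB (Or.inl hx))
    (by simp [hx]) hy (by simp [hy])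
  have haU : a ∉ U := fun haU => hb (hUB (Or.inr ⟨a, haU, hab⟩))
  obtain rfl : a = t := by
    by_contra hat
    exact has (Finset.mem_erase.2 ⟨hat, Finset.mem_sdiff.2 ⟨ha, haU⟩⟩)
  exact ⟨b, hb, hab⟩

end IsTwoConnected

section Slices

variable [DecidableEq α] [DecidableEq β]

/-- The slice of `S` over the vertex `x` of the first factor of a product. -/
def column [Fintype β] (S : Finset (α × β)) (x : α) : Finset β := {y | (x, y) ∈ S}

/-- The slice of `S` over the vertex `y` of the second factor of a product. -/
def row [Fintype α] (S : Finset (α × β)) (y : β) : Finset α := {x | (x, y) ∈ S}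

variable {U B S : Finset (α × β)} {G : SimpleGraph α} {H : SimpleGraph β}

section Column

variable [Fintype β]

@[simp]
theorem mem_column {x : α} {y : β} : y ∈ column S x ↔ (x, y) ∈ S := by
  simp [column]

theorem column_sdiff (x : α) : column (B \ U) x = column B x \ column U x := by
  ext; simp

theorem column_mono (h : U ⊆ B) (x : α) : column U x ⊆ column B x := by
  intro y; simpa using @h (x, y)

theorem closedNbhd_column_subset (h : closedNbhd (G □ H) ↑U ⊆ ↑B) (x : α) :
    closedNbhd H ↑(column U x) ⊆ ↑(column B x) := by
  rintro y (hy | ⟨z, hz, hzy⟩)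
  · simpa using h (Or.inl (by simpa using hy))
  · simpa using h (Or.inr ⟨(x, z), by simpa using hz, boxProd_adj_right.2 hzy⟩)

theorem card_column (S : Finset (α × β)) (x : α) :
    (column S x).card = ∑ y, if (x, y) ∈ S then 1 else 0 :=
  Finset.card_filter _ _

theorem two_le_card_column (hH : IsTwoConnected H) (hUB : closedNbhd (G □ H) ↑U ⊆ ↑B) {x : α}
    {y y' : β} (hy : (x, y) ∈ U) (hy' : (x, y') ∉ B) : 2 ≤ (column (B \ U) x).card := by
  rw [column_sdiff]
  exact hH.two_le_card_sdiff (closedNbhd_column_subset hUB x) (mem_column.2 hy)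
    (mem_column.not.2 hy')

theorem column_eq_empty_or_eq_univ (hH : IsTwoConnected H)
    (hUB : closedNbhd (G □ H) ↑U ⊆ ↑B) {x : α}
    (hx : (column (B \ U) x).card ≤ 1) : column U x = ∅ ∨ column B x = Finset.univ := by
  by_contra! h
  obtain ⟨⟨y, hy⟩, hne⟩ := h
  obtain ⟨y', hy'⟩ : ∃ y', y' ∉ column B x := by simpa [Finset.eq_univ_iff_forall] using hne
  have := two_le_card_column hH hUB (mem_column.1 hy) (mem_column.not.1 hy')
  omega

end Column

section Row

variable [Fintype α]

@[simp]
theorem mem_row {x : α} {y : β} : x ∈ row S y ↔ (x, y) ∈ S := by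
  simp [row]

theorem row_sdiff (y : β) : row (B \ U) y = row B y \ row U y := by
  ext; simp

theorem closedNbhd_row_subset (h : closedNbhd (G □ H) ↑U ⊆ ↑B) (y : β) :
    closedNbhd G ↑(row U y) ⊆ ↑(row B y) := by
  rintro x (hx | ⟨z, hz, hzx⟩)
  · simpa using h (Or.inl (by simpa using hx))
  · simpa using h (Or.inr ⟨(z, y), by simpa using hz, boxProd_adj_left.2 hzx⟩)

theorem two_le_card_row (hG : IsTwoConnected G) (hUB : closedNbhd (G □ H) ↑U ⊆ ↑B) {x x' : α}
    {y : β} (hx : (x, y) ∈ U) (hx' : (x', y) ∉ B) : 2 ≤ (row (B \ U) y).card := by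
  rw [row_sdiff]
  exact hG.two_le_card_sdiff (closedNbhd_row_subset hUB y) (mem_row.2 hx) (mem_row.not.2 hx')

end Row

variable [Fintype α] [Fintype β]

theorem sum_card_column (S : Finset (α × β)) : ∑ x, (column S x).card = S.card := by
  simp only [column, Finset.card_filter, ← Fintype.sum_prod_type', Prod.mk.eta]
  simp

theorem sum_card_row (S : Finset (α × β)) : ∑ y, (row S y).card = S.card := by
  simp only [row, Finset.card_filter, ← Fintype.sum_prod_type_right', Prod.mk.eta]
  simp

theorem exists_card_column_le_one (hS : S.card < 2 * Fintype.card α) :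
    ∃ x, (column S x).card ≤ 1 := by
  by_contra! h
  have := Finset.card_nsmul_le_sum Finset.univ (fun x => (column S x).card) 2 fun x _ => h x
  rw [sum_card_column, Finset.card_univ, smul_eq_mul] at this
  omega

end Slices

section Counting

variable {ι : Type*} [Fintype ι] {f : ι → ℕ} {k : ℕ}

theorem eq_of_sum_le_card_mul (hf : ∀ i, k ≤ f i) (hsum : ∑ i, f i ≤ Fintype.card ι * k) (i : ι) :
    f i = k := by
  have hle : ∑ _i : ι, k ≤ ∑ i, f i := Finset.sum_le_sum fun i _ => hf i
  have heq : ∑ _i : ι, k = ∑ i, f i := hle.antisymm (by simpa using hsum)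
  exact ((Finset.sum_eq_sum_iff_of_le fun i _ => hf i).1 heq i (Finset.mem_univ i)).symm

theorem eq_two_of_sum_add_two_le {a b : ι} (ha : 1 ≤ f a) (hb : 1 ≤ f b)
    (hf : ∀ i, i ≠ a → i ≠ b → 2 ≤ f i) (hsum : ∑ i, f i + 2 ≤ 2 * Fintype.card ι) {i : ι}
    (hia : i ≠ a) (hib : i ≠ b) : f i = 2 := by
  classical
  let g (i : ι) : ℕ := f i + (if i = a then 1 else 0) + (if i = b then 1 else 0)
  have two_le (i : ι) : 2 ≤ g i := by
    simp only [g]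
    by_cases hia : i = a
    · subst hia; simp only [if_true]; omega
    by_cases hib : i = b
    · subst hib; simp only [if_true]; omega
    · simpa [hia, hib] using hf i hia hib
  have sum_g : ∑ i, g i ≤ Fintype.card ι * 2 := by
    simp only [g, Finset.sum_add_distrib, Finset.sum_ite_eq', Finset.mem_univ, if_true]
    omega
  simpa [g, hia, hib] using eq_of_sum_le_card_mul two_le sum_g i

end Counting

section BoxProd

variable [Fintype α] [Fintype β] [DecidableEq α] [DecidableEq β]
  {G : SimpleGraph α} {H : SimpleGraph β} {U B : Finset (α × β)} {c d : α} {r s : β}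

/-- Counting the vertices of `B \ U` in the columns `c` and `d` twice makes the bound hold in every
row, at a total cost of at most two when both columns are light. -/
theorem two_le_card_row_add (hG : IsTwoConnected G) (hUB : closedNbhd (G □ H) ↑U ⊆ ↑B)
    (hc : column U c = ∅) (hd : column B d = Finset.univ) (y : β) :
    2 ≤ (row (B \ U) y).card + (if (c, y) ∈ B \ U then 1 else 0) +
      (if (d, y) ∈ B \ U then 1 else 0) := by
  have hcU : (c, y) ∉ U := by simp [← mem_column, hc]
  have hdB : (d, y) ∈ B := by simp [← mem_column, hd]
  have pos {x : α} (hx : (x, y) ∈ B \ U) : 0 < (row (B \ U) y).card :=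
    Finset.card_pos.2 ⟨x, mem_row.2 hx⟩
  by_cases hcT : (c, y) ∈ B \ U
  · have := pos hcT
    simp only [hcT, if_true]
    omega
  by_cases hdT : (d, y) ∈ B \ U
  · have := pos hdT
    simp only [hdT, if_true]
    omega
  have hdU : (d, y) ∈ U := by simpa [hdB] using hdT
  have hcB : (c, y) ∉ B := by simpa [hcU] using hcT
  simpa [hcT, hdT] using two_le_card_row hG hUB hdU hcB

theorem sum_card_row_add (S : Finset (α × β)) (c d : α) :
    ∑ y, ((row S y).card + (if (c, y) ∈ S then 1 else 0) + (if (d, y) ∈ S then 1 else 0)) =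
      S.card + (column S c).card + (column S d).card := by
  rw [Finset.sum_add_distrib, Finset.sum_add_distrib, sum_card_row, card_column, card_column]

theorem exists_card_row_le_one (hG : IsTwoConnected G) (hUB : closedNbhd (G □ H) ↑U ⊆ ↑B)
    (hcard : (B \ U).card + 2 ≤ 2 * Fintype.card β)
    (hc : column U c = ∅) (hcT : (column (B \ U) c).card ≤ 1)
    (hd : column B d = Finset.univ) (hdT : (column (B \ U) d).card ≤ 1) :
    ∃ r s, r ≠ s ∧ column (B \ U) c = {r} ∧ column (B \ U) d = {s} ∧
      (row (B \ U) r).card ≤ 1 ∧ (row (B \ U) s).card ≤ 1 := by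
  have two_le := two_le_card_row_add hG hUB hc hd
  have sum_eq := sum_card_row_add (B \ U) c d
  have two_mul_le := Finset.card_nsmul_le_sum Finset.univ _ 2 fun y _ => two_le y
  rw [sum_eq, Finset.card_univ, smul_eq_mul] at two_mul_le
  have row_eq := eq_of_sum_le_card_mul two_le (by rw [sum_eq]; omega)
  obtain ⟨r, hr⟩ := Finset.card_eq_one.1 (show (column (B \ U) c).card = 1 by omega)
  obtain ⟨s, hs⟩ := Finset.card_eq_one.1 (show (column (B \ U) d).card = 1 by omega)
  simp only [← mem_column (S := B \ U), hr, hs, Finset.mem_singleton] at row_eq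
  have hrs : r ≠ s := by
    rintro rfl
    have hcr : c ∈ row (B \ U) r := mem_row.2 (mem_column.1 (by simp [hr]))
    have := Finset.card_pos.2 ⟨c, hcr⟩
    have := row_eq r
    simp only [if_true] at this
    omega
  refine ⟨r, s, hrs, hr, hs, ?_, ?_⟩
  · have := row_eq r
    simp only [if_true] at this
    omega
  · have := row_eq s
    simp only [if_true] at this
    omega

/-- The extremal position of the blue set `B` and the spent set `U` in a product: column `c` and row
`s` avoid `U`, column `d` and row `r` lie in `B`, and each of these four lines meets `B \ U` in a
single vertex. -/
structure IsCross (U B : Finset (α × β)) (c d : α) (r s : β) : Prop where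
  mem_blue_column : ∀ y, (c, y) ∈ B ↔ y = r
  mem_spent_column : ∀ y, (d, y) ∈ U ↔ y ≠ s
  mem_spent_row : ∀ x, (x, r) ∈ U ↔ x ≠ c
  mem_blue_row : ∀ x, (x, s) ∈ B ↔ x = d

theorem exists_isCross (hG : IsTwoConnected G) (hUB : closedNbhd (G □ H) ↑U ⊆ ↑B)
    (hcard : (B \ U).card + 2 ≤ 2 * Fintype.card β)
    (hc : column U c = ∅) (hcT : (column (B \ U) c).card ≤ 1)
    (hd : column B d = Finset.univ) (hdT : (column (B \ U) d).card ≤ 1) :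
    ∃ r s, IsCross U B c d r s := by
  obtain ⟨r, s, hrs, hr, hs, row_r, row_s⟩ := exists_card_row_le_one hG hUB hcard hc hcT hd hdT
  have hcU (y : β) : (c, y) ∉ U := by simp [← mem_column, hc]
  have hdB (y : β) : (d, y) ∈ B := by simp [← mem_column, hd]
  have c_mem (y : β) : (c, y) ∈ B \ U ↔ y = r := by rw [← mem_column, hr, Finset.mem_singleton]
  have d_mem (y : β) : (d, y) ∈ B \ U ↔ y = s := by rw [← mem_column, hs, Finset.mem_singleton]
  have mem_B_iff (y : β) : (c, y) ∈ B ↔ y = r := by simpa [hcU] using c_mem y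
  have mem_U_iff (y : β) : (d, y) ∈ U ↔ y ≠ s := by
    rw [← not_iff_not, not_ne_iff]; simpa [hdB] using d_mem y
  refine ⟨r, s, mem_B_iff, mem_U_iff, fun x => ?_, fun x => ?_⟩
  · refine ⟨fun hx e => hcU r (e ▸ hx), fun hxc => ?_⟩
    by_contra hxU
    have hxB : (x, r) ∉ B := fun hxB => hxc <| Finset.card_le_one.1 row_r x
      (by simp [hxB, hxU]) c (mem_row.2 ((c_mem r).2 rfl))
    exact (two_le_card_row hG hUB ((mem_U_iff r).2 hrs) hxB).not_gt (by omega)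
  · refine ⟨fun hxB => ?_, fun e => e ▸ hdB s⟩
    by_contra hxd
    have hxU : (x, s) ∈ U := by
      by_contra hxU
      exact hxd <| Finset.card_le_one.1 row_s x
        (by simp [hxB, hxU]) d (mem_row.2 ((d_mem s).2 rfl))
    exact (two_le_card_row hG hUB hxU ((mem_B_iff s).not.2 hrs.symm)).not_gt (by omega)

namespace IsCross

theorem eq_two_card_column (h : IsCross U B c d r s) (hH : IsTwoConnected H)
    (hUB : closedNbhd (G □ H) ↑U ⊆ ↑B) (hcard : (B \ U).card + 2 ≤ 2 * Fintype.card α) {x : α}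
    (hxc : x ≠ c) (hxd : x ≠ d) : (column (B \ U) x).card = 2 := by
  refine eq_two_of_sum_add_two_le (f := fun x => (column (B \ U) x).card) (a := c) (b := d)
    ?_ ?_ (fun i hic hid => ?_) (by rwa [sum_card_column]) hxc hxd
  · exact Finset.card_pos.2 ⟨r, by simp [h.mem_blue_column, h.mem_spent_row]⟩
  · exact Finset.card_pos.2 ⟨s, by simp [h.mem_blue_row, h.mem_spent_column]⟩
  · exact two_le_card_column hH hUB ((h.mem_spent_row i).2 hic) ((h.mem_blue_row i).not.2 hid)

theorem eq_two_card_row (h : IsCross U B c d r s) (hG : IsTwoConnected G)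
    (hUB : closedNbhd (G □ H) ↑U ⊆ ↑B) (hcard : (B \ U).card + 2 ≤ 2 * Fintype.card β) {y : β}
    (hyr : y ≠ r) (hys : y ≠ s) : (row (B \ U) y).card = 2 := by
  refine eq_two_of_sum_add_two_le (f := fun y => (row (B \ U) y).card) (a := r) (b := s)
    ?_ ?_ (fun j hjr hjs => ?_) (by rwa [sum_card_row]) hyr hys
  · exact Finset.card_pos.2 ⟨c, by simp [h.mem_blue_column, h.mem_spent_row]⟩
  · exact Finset.card_pos.2 ⟨d, by simp [h.mem_blue_row, h.mem_spent_column]⟩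
  · exact two_le_card_row hG hUB ((h.mem_spent_column j).2 hjs) ((h.mem_blue_column j).not.2 hjr)

theorem exists_adj_ne_notMem (h : IsCross U B c d r s) (hG : IsTwoConnected G)
    (hH : IsTwoConnected H) (hUB : closedNbhd (G □ H) ↑U ⊆ ↑B)
    (hα : (B \ U).card + 2 ≤ 2 * Fintype.card α) (hβ : (B \ U).card + 2 ≤ 2 * Fintype.card β)
    {t : α × β} (ht : t ∈ B \ U) (w : α × β) : ∃ v ≠ w, (G □ H).Adj t v ∧ v ∉ B := by
  obtain ⟨x, y⟩ := t
  obtain ⟨htB, htU⟩ := Finset.mem_sdiff.1 ht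
  by_cases hxc : x = c
  · obtain ⟨rfl, rfl⟩ := And.intro hxc ((h.mem_blue_column y).1 (hxc ▸ htB))
    obtain ⟨y', hy'w, hyy'⟩ := hH.exists_adj_ne y w.2
    exact ⟨(x, y'), fun e => hy'w (congrArg Prod.snd e), boxProd_adj_right.2 hyy',
      (h.mem_blue_column y').not.2 hyy'.ne'⟩
  by_cases hxd : x = d
  · obtain rfl : y = s := by
      by_contra hys
      exact htU (hxd ▸ (h.mem_spent_column y).2 hys)
    subst hxd
    obtain ⟨x', hx'w, hxx'⟩ := hG.exists_adj_ne x w.1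
    exact ⟨(x', y), fun e => hx'w (congrArg Prod.fst e), boxProd_adj_left.2 hxx',
      (h.mem_blue_row x').not.2 hxx'.ne'⟩
  have hyr : y ≠ r := fun e => htU (e ▸ (h.mem_spent_row x).2 hxc)
  have hys : y ≠ s := fun e => hxd ((h.mem_blue_row x).1 (e ▸ htB))
  obtain ⟨y', hy'B, hyy'⟩ : ∃ y' ∉ column B x, H.Adj y y' :=
    hH.exists_adj_notMem (closedNbhd_column_subset hUB x)
      (mem_column.2 ((h.mem_spent_row x).2 hxc)) (mem_column.not.2 ((h.mem_blue_row x).not.2 hxd))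
      (by rw [← column_sdiff, h.eq_two_card_column hH hUB hα hxc hxd]) (by simpa using ht)
  obtain ⟨x', hx'B, hxx'⟩ : ∃ x' ∉ row B y, G.Adj x x' :=
    hG.exists_adj_notMem (closedNbhd_row_subset hUB y)
      (mem_row.2 ((h.mem_spent_column y).2 hys)) (mem_row.not.2 ((h.mem_blue_column y).not.2 hyr))
      (by rw [← row_sdiff, h.eq_two_card_row hG hUB hβ hyr hys]) (by simpa using ht)
  by_cases hw : w = (x, y')
  · refine ⟨(x', y), ?_, boxProd_adj_left.2 hxx', mem_row.not.1 hx'B⟩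
    simp [hw, hxx'.ne']
  · exact ⟨(x, y'), Ne.symm hw, boxProd_adj_right.2 hyy', mem_column.not.1 hy'B⟩

end IsCross

theorem column_ne_univ_of_force (hG : IsTwoConnected G) (hH : IsTwoConnected H)
    (hUB : closedNbhd (G □ H) ↑U ⊆ ↑B) (hα : (B \ U).card + 2 ≤ 2 * Fintype.card α)
    (hβ : (B \ U).card + 2 ≤ 2 * Fintype.card β)
    (hc : column U c = ∅) (hcT : (column (B \ U) c).card ≤ 1) (hdT : (column (B \ U) d).card ≤ 1)
    {u w : α × β} (hu : u ∈ B \ U) (h : ∀ x, (G □ H).Adj u x → x ≠ w → x ∈ B) :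
    column B d ≠ Finset.univ := by
  intro hd
  obtain ⟨r, s, hcross⟩ := exists_isCross hG hUB hβ hc hcT hd hdT
  obtain ⟨v, hvw, huv, hvB⟩ := hcross.exists_adj_ne_notMem hG hH hUB hα hβ hu w
  exact hvB (h v huv hvw)

theorem ForcingStage.exists_column_eq_empty (hG : IsTwoConnected G) (hH : IsTwoConnected H)
    (hαβ : Fintype.card α ≤ Fintype.card β) {B₀ : Finset (α × β)}
    (hB₀ : B₀.card + 2 ≤ 2 * Fintype.card α) (hs : ForcingStage (G □ H) B₀ U B) :
    ∃ c, column U c = ∅ ∧ (column (B \ U) c).card ≤ 1 := by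
  induction hs with
  | init =>
    obtain ⟨c, hc⟩ := exists_card_column_le_one (S := B₀) (by omega)
    exact ⟨c, by simp [column], by simpa using hc⟩
  | @force U B u w hs hu hw huw h ih =>
    obtain ⟨c, hc, hcT⟩ := ih
    have hT := hs.card_sdiff
    have huU := hs.notMem_of_adj_notMem huw hw
    -- `insert w B \ U` contains the separators both before and after the force.
    obtain ⟨d, hd⟩ := exists_card_column_le_one (S := insert w B \ U) <| by
      have hwU : w ∉ U := fun hwU => hw (hs.closedNbhd_subset (Or.inl hwU))
      have := Finset.card_insert_le w (B \ U)
      rw [Finset.insert_sdiff_of_notMem B hwU]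
      omega
    have before : (column (B \ U) d).card ≤ 1 := (Finset.card_le_card <| column_mono
      (Finset.sdiff_subset_sdiff (Finset.subset_insert w B) subset_rfl) d).trans hd
    have after : (column (insert w B \ insert u U) d).card ≤ 1 := (Finset.card_le_card <|
      column_mono (Finset.sdiff_subset_sdiff subset_rfl (Finset.subset_insert u U)) d).trans hd
    have hdU : column U d = ∅ :=
      (column_eq_empty_or_eq_univ hH hs.closedNbhd_subset before).resolve_right <|
        column_ne_univ_of_force hG hH hs.closedNbhd_subset (by omega) (by omega) hc hcT before
          (Finset.mem_sdiff.2 ⟨hu, huU⟩) h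
    have hdB : column (insert w B) d ≠ Finset.univ := by
      intro hd_univ
      rw [column_sdiff, hd_univ, hdU, Finset.sdiff_empty, Finset.card_univ] at hd
      exact absurd hH.three_le_card (by omega)
    exact ⟨d, (column_eq_empty_or_eq_univ hH
      (hs.force hu hw huw h).closedNbhd_subset after).resolve_right hdB, after⟩

end BoxProd

section Main

variable [Fintype α] [Fintype β] {G : SimpleGraph α} {H : SimpleGraph β}

theorem IsTwoConnected.two_mul_card_sub_one_le_zeroForcingNumber_boxProd (hG : IsTwoConnected G)
    (hH : IsTwoConnected H) (hαβ : Fintype.card α ≤ Fintype.card β) :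
    2 * Fintype.card α - 1 ≤ zeroForcingNumber (G □ H) := by
  classical
  by_contra! hlt
  obtain ⟨B₀, hcard, hB₀⟩ := exists_isZeroForcingSet_card (G □ H)
  obtain ⟨U, hs⟩ := hB₀.exists_forcingStage_univ
  obtain ⟨c, hc, hcT⟩ := hs.exists_column_eq_empty hG hH hαβ (by omega)
  have column_univ : column (Finset.univ : Finset (α × β)) c = Finset.univ := by simp [column]
  rw [column_sdiff, hc, Finset.sdiff_empty, column_univ, Finset.card_univ] at hcT
  exact absurd hH.three_le_card (by omega)

theorem stmt19_general (hG : IsTwoConnected G) (hH : IsTwoConnected H)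
    (hαβ : Fintype.card α ≤ Fintype.card β) :
    2 * Fintype.card α - 1 ≤ maxDeg (G □ H) * powerDominationNumber (G □ H) := by
  have exists_adj (v : α × β) : ∃ w, (G □ H).Adj v w := by
    obtain ⟨y, -, hy⟩ := hH.exists_adj_ne v.2 v.2
    exact ⟨(v.1, y), boxProd_adj_right.2 hy⟩
  exact (hG.two_mul_card_sub_one_le_zeroForcingNumber_boxProd hH hαβ).trans
    (zeroForcingNumber_le_maxDeg_mul_powerDominationNumber exists_adj)

end Main

section CycleGraph

/-- The arc `v + 1, v + 2, …, v + n` left of an `(n + 1)`-cycle after deleting `v`. -/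
def pathGraphHomCycleGraph {n : ℕ} (v : Fin (n + 1)) :
    pathGraph n →g (cycleGraph (n + 1)).induce {v}ᶜ where
  toFun i := ⟨v + i.succ, by simp⟩
  map_rel' := by
    have step {i j : Fin n} (hij : i.val + 1 = j.val) :
        (cycleGraph (n + 1)).Adj (v + j.succ) (v + i.succ) := by
      have hle : i.succ ≤ j.succ := Fin.succ_le_succ_iff.2 (Fin.le_def.2 (by omega))
      rw [cycleGraph_adj', add_sub_add_left_eq_sub, Fin.sub_val_of_le hle]
      simp [← hij]
    intro i j hij
    rcases pathGraph_adj.1 hij with hij | hji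
    · exact (step hij).symm
    · exact step hji

theorem pathGraphHomCycleGraph_surjective {n : ℕ} (v : Fin (n + 1)) :
    Function.Surjective (pathGraphHomCycleGraph v) := by
  rintro ⟨x, hx⟩
  obtain ⟨i, hi⟩ := Fin.exists_succ_eq.2 (sub_ne_zero.2 hx)
  exact ⟨i, Subtype.ext (by simp [pathGraphHomCycleGraph, hi])⟩

theorem isTwoConnected_cycleGraph {n : ℕ} (hn : 3 ≤ n) : IsTwoConnected (cycleGraph n) where
  three_le_card := by simpa using hn
  preconnected_induce_compl s hs := by
    obtain ⟨k, rfl⟩ : ∃ k, n = k + 1 := ⟨n - 1, by omega⟩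
    rcases hs.eq_empty_or_singleton with rfl | ⟨v, rfl⟩
    · rw [Set.compl_empty]
      exact (induceUnivIso (cycleGraph (k + 1))).preconnected_iff.2 cycleGraph_preconnected
    · exact (pathGraph_preconnected k).map _ (pathGraphHomCycleGraph_surjective v)

theorem maxDeg_cycleGraph_boxProd_cycleGraph {n m : ℕ} (hn : 3 ≤ n) (hm : 3 ≤ m) :
    maxDeg (cycleGraph n □ cycleGraph m) = 4 := by
  obtain ⟨a, rfl⟩ : ∃ a, n = a + 3 := ⟨n - 3, by omega⟩
  obtain ⟨b, rfl⟩ : ∃ b, m = b + 3 := ⟨m - 3, by omega⟩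
  have deg_eq (v : Fin (a + 3) × Fin (b + 3)) :
      deg (cycleGraph (a + 3) □ cycleGraph (b + 3)) v = 4 := by
    rw [deg_eq_degree, degree_boxProd, cycleGraph_degree_three_le, cycleGraph_degree_three_le]
  simp only [maxDeg, deg_eq, Finset.sup_const Finset.univ_nonempty]

end CycleGraph

/-- For `m ≥ n ≥ 3`, `⌈n/2⌉ ≤ γ_P(C_n □ C_m)`. -/
theorem stmt19 (n m : ℕ) (hn : 3 ≤ n) (hm : n ≤ m) :
    (n + 1) / 2 ≤ powerDominationNumber ((cycleGraph n).boxProd (cycleGraph m)) := by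
  have h := stmt19_general (isTwoConnected_cycleGraph hn) (isTwoConnected_cycleGraph (hn.trans hm))
    (by simpa using hm)
  rw [maxDeg_cycleGraph_boxProd_cycleGraph hn (hn.trans hm), Fintype.card_fin] at h
  omega

end PaperPD
end
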